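/- Let Ω ⊂ ℝⁿ be a bounded Lipschitz domain, let F: ℝ^{N×n} → [0,∞) be convex with ν|z| − L ≤ F(z) ≤ L(1+|z|) for all z ∈ ℝ^{N×n} (constants 0 < ν ≤ L < ∞), and let T₀ ∈ L^∞(Ω;ℝ^{N×n}) satisfy ess inf_{x∈Ω} min_{|ξ|=1} (F^∞(ξ) − T₀(x)·ξ) > 0. Then the functional 𝓕[w] = ∫_Ω (F(∇w) − T₀·∇w) dx is coercive: there exist δ > 0 and C > 0 such that 𝓕[w] ≥ δ ∫_Ω |∇w| dx − C for all w ∈ W^{1,1}(Ω;ℝ^N) with (w)_Ω = 0; in particular, if (w_k) is a sequence in W^{1,1}(Ω;ℝ^N) with (w_k)_Ω = 0 for all k and ‖w_k‖_{W^{1,1}(Ω;ℝ^N)} → ∞, then 𝓕[w_k] → ∞ as k → ∞. -/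

import Mathlib

open MeasureTheory Filter Topology Set
open scoped ENNReal RealInnerProductSpace

noncomputable section

/-- Euclidean space `ℝⁿ`. -/
abbrev EVec (n : ℕ) := EuclideanSpace ℝ (Fin n)

/-- Frobenius inner product of two "matrices". -/
def mdot {ι κ : Type*} [Fintype ι] [Fintype κ] (A B : ι → κ → ℝ) : ℝ :=
  ∑ a, ∑ i, A a i * B a i

/-- Frobenius norm. -/
noncomputable def mnorm {ι κ : Type*} [Fintype ι] [Fintype κ] (A : ι → κ → ℝ) : ℝ :=
  Real.sqrt (mdot A A)

/-- Euclidean norm of a vector given as a tuple. -/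
noncomputable def vnorm {ι : Type*} [Fintype ι] (v : ι → ℝ) : ℝ :=
  Real.sqrt (∑ a, v a ^ 2)

/-- `Ω ⊆ ℝⁿ` is a (nonempty, open, connected) Lipschitz domain: every boundary point has
a neighbourhood on which `Ω` can be flattened to a half space by a bi-Lipschitz map. -/
def IsLipschitzDomain {n : ℕ} (Ω : Set (EVec n)) : Prop :=
  IsOpen Ω ∧ Ω.Nonempty ∧ IsConnected Ω ∧
  ∀ x ∈ frontier Ω, ∃ (U : Set (EVec n)) (h hinv : EVec n → EVec n) (K : NNReal)
      (e : EVec n),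
    ‖e‖ = 1 ∧ IsOpen U ∧ x ∈ U ∧ LipschitzOnWith K h U ∧
    LipschitzOnWith K hinv (h '' U) ∧ (∀ y ∈ U, hinv (h y) = y) ∧
    h '' (U ∩ Ω) = (h '' U) ∩ {y : EVec n | 0 < ⟪e, y⟫}

/-- `Du` is the weak (distributional) gradient of `u` on `Ω`, and both are integrable;
i.e. `u ∈ W^{1,1}(Ω; ℝ^ι)` with weak gradient `Du`. -/
def HasWeakDerivOn {n : ℕ} {ι : Type*} [Fintype ι] (Ω : Set (EVec n))
    (u : EVec n → ι → ℝ) (Du : EVec n → ι → Fin n → ℝ) : Prop :=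
  IntegrableOn u Ω volume ∧ IntegrableOn Du Ω volume ∧
  ∀ φ : EVec n → ℝ, ContDiff ℝ 1 φ → HasCompactSupport φ → tsupport φ ⊆ Ω →
    ∀ (a : ι) (i : Fin n),
      ∫ x in Ω, u x a * fderiv ℝ φ x (EuclideanSpace.single i 1) =
        - ∫ x in Ω, Du x a i * φ x

/-- `u ∈ W^{1,2}(Ω;ℝ^ι)` with weak gradient `Du`. -/
def MemW12 {n : ℕ} {ι : Type*} [Fintype ι] (Ω : Set (EVec n))
    (u : EVec n → ι → ℝ) (Du : EVec n → ι → Fin n → ℝ) : Prop :=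
  HasWeakDerivOn Ω u Du ∧ IntegrableOn (fun x => vnorm (u x) ^ 2) Ω volume ∧
    IntegrableOn (fun x => mnorm (Du x) ^ 2) Ω volume

/-- vanishing mean value `(u)_Ω = 0`. -/
def ZeroMean {n : ℕ} {ι : Type*} [Fintype ι] (Ω : Set (EVec n))
    (u : EVec n → ι → ℝ) : Prop :=
  ∀ a : ι, ∫ x in Ω, u x a = 0

/-- The `L^∞(Ω)` norm of a matrix field (w.r.t. the pointwise Frobenius norm). -/
noncomputable def linfNormOn {n N : ℕ} (Ω : Set (EVec n))
    (T : EVec n → Fin N → Fin n → ℝ) : ℝ≥0∞ :=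
  essSup (fun x => ENNReal.ofReal (mnorm (T x))) (volume.restrict Ω)

/-- `T ∈ W^{1,∞}(Ω)`: bounded and Lipschitz on `Ω`. -/
def MemW1inf {n N : ℕ} (Ω : Set (EVec n)) (T : EVec n → Fin N → Fin n → ℝ) : Prop :=
  ∃ C : NNReal, (∀ x ∈ Ω, ‖T x‖ ≤ C) ∧ LipschitzOnWith C T Ω

/-- `T ∈ W^{2,∞}(Ω)`: `T` is bounded with bounded Lipschitz derivative on `Ω`. -/
def MemW2inf {n N : ℕ} (Ω : Set (EVec n)) (T : EVec n → Fin N → Fin n → ℝ) : Prop :=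
  ∃ (C : NNReal) (DT : EVec n → EVec n →L[ℝ] (Fin N → Fin n → ℝ)),
    (∀ x ∈ Ω, ‖T x‖ ≤ C) ∧ (∀ x ∈ Ω, HasFDerivWithinAt T (DT x) Ω x) ∧
    (∀ x ∈ Ω, ‖DT x‖ ≤ C) ∧ LipschitzOnWith C DT Ω

/-- The nonlinear map `A(z) = f'(|z|) z / |z|` (equal to `0` at `z = 0`). -/
noncomputable def Amap {N n : ℕ} (f' : ℝ → ℝ) (z : Fin N → Fin n → ℝ) :
    Fin N → Fin n → ℝ :=
  fun a i => (f' (mnorm z) / mnorm z) * z a i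

/-- `u` is a weak solution of the Neumann problem for the integrand `f(|·|)` and datum `T₀`. -/
def IsWeakSolution {n N : ℕ} (Ω : Set (EVec n)) (f' : ℝ → ℝ)
    (T₀ : EVec n → Fin N → Fin n → ℝ)
    (u : EVec n → Fin N → ℝ) (Du : EVec n → Fin N → Fin n → ℝ) : Prop :=
  HasWeakDerivOn Ω u Du ∧
  ∀ φ Dφ, HasWeakDerivOn Ω φ Dφ →
    ∫ x in Ω, mdot (Amap f' (Du x)) (Dφ x) = ∫ x in Ω, mdot (T₀ x) (Dφ x)

/-- The functional `𝔉[w] = ∫_Ω (f(|∇w|) − T₀ · ∇w) dx` (as a function of the gradient). -/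
noncomputable def FF {n N : ℕ} (Ω : Set (EVec n)) (f : ℝ → ℝ)
    (T₀ : EVec n → Fin N → Fin n → ℝ) (Du : EVec n → Fin N → Fin n → ℝ) : ℝ :=
  ∫ x in Ω, (f (mnorm (Du x)) - mdot (T₀ x) (Du x))

/-- The regularised functional `𝔉_k[w] = 𝔉[w] + (2k)⁻¹ ∫_Ω |∇w|² dx`. -/
noncomputable def FFk {n N : ℕ} (Ω : Set (EVec n)) (f : ℝ → ℝ)
    (T₀ : EVec n → Fin N → Fin n → ℝ) (k : ℕ)
    (Du : EVec n → Fin N → Fin n → ℝ) : ℝ :=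
  FF Ω f T₀ Du + (2 * (k : ℝ))⁻¹ * ∫ x in Ω, mnorm (Du x) ^ 2

end

/-- The functional `𝓕[w] = ∫_Ω (F(∇w) − T₀·∇w) dx` for a general integrand `F`. -/
noncomputable def FFgen {n N : ℕ} (Ω : Set (EVec n)) (F : (Fin N → Fin n → ℝ) → ℝ)
    (T₀ : EVec n → Fin N → Fin n → ℝ) (Du : EVec n → Fin N → Fin n → ℝ) : ℝ :=
  ∫ x in Ω, (F (Du x) - mdot (T₀ x) (Du x))

/-!
A convex function of linear growth is Lipschitz, so the rescalings `t * F (t⁻¹ • ·)` are equally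
Lipschitz and converge to `F^∞` uniformly on the unit sphere. Hence `F z ≥ F^∞ z - ε |z| - C`, and
with `ε` half the coercivity constant the lower bound on the functional follows by integration.

The divergence statement also needs the Poincaré inequality on `Ω`. In a bi-Lipschitz chart it is
reduced to a convex set by mollification and integration along segments; the local inequalities
are glued along a finite cover of the connected set `Ω`. A chart is only assumed to be bi-Lipschitz
onto its image, so one must know that the image contains a ball. This is invariance of domain,
obtained from the fact that the Jacobian of a Lipschitz map `id + u` with `u = 0` off `U` has
integral `|U|`: for `t • u` with `t` small this is the area formula, and both sides are polynomial
in `t`.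
-/

section LipschitzImages

variable {E : Type*} [NormedAddCommGroup E] [NormedSpace ℝ E] [FiniteDimensional ℝ E]
  [MeasurableSpace E] [BorelSpace E] {μ : Measure E} [μ.IsAddHaarMeasure]

lemma addHaar_image_le_of_lipschitzOnWith {K : NNReal} {f : E → E} {s : Set E}
    (hf : LipschitzOnWith K f s) : μ (f '' s) ≤ (K : ℝ≥0∞) ^ Module.finrank ℝ E * μ s := by
  have h_haus := hf.hausdorffMeasure_image_le (d := Module.finrank ℝ E) (by positivity)
  rw [ENNReal.rpow_natCast] at h_haus
  rw [Measure.isAddLeftInvariant_eq_smul μ (Measure.hausdorffMeasure (Module.finrank ℝ E))]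
  simp only [Measure.smul_apply, ENNReal.smul_def, smul_eq_mul]
  rw [mul_left_comm]
  gcongr

lemma setLIntegral_image_le_of_lipschitzOnWith {K : NNReal} {k : E → E} {s : Set E}
    (hk : Measurable k) (hks : LipschitzOnWith K k s) {G : E → ℝ≥0∞} (hG : Measurable G) :
    ∫⁻ y in k '' s, G y ∂μ ≤ (K : ℝ≥0∞) ^ Module.finrank ℝ E * ∫⁻ x in s, G (k x) ∂μ := by
  have h_le : μ.restrict (k '' s) ≤
      (K : ℝ≥0∞) ^ Module.finrank ℝ E • (μ.restrict s).map k := by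
    refine Measure.le_iff.2 fun t ht => ?_
    rw [Measure.restrict_apply ht, Measure.smul_apply, smul_eq_mul, Measure.map_apply hk ht,
      Measure.restrict_apply (hk ht), inter_comm t, ← image_inter_preimage, inter_comm s]
    exact addHaar_image_le_of_lipschitzOnWith (hks.mono inter_subset_right)
  refine (lintegral_mono' h_le le_rfl).trans_eq ?_
  rw [lintegral_smul_measure, smul_eq_mul, lintegral_map hG hk]

lemma setLIntegral_comp_le_of_lipschitzOnWith_leftInvOn {K : NNReal} {h k : E → E} {s : Set E}
    (hk : Measurable k) (hh : LipschitzOnWith K h (k '' s)) (hhk : LeftInvOn h k s)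
    {G : E → ℝ≥0∞} (hG : Measurable G) :
    ∫⁻ x in s, G (k x) ∂μ ≤ (K : ℝ≥0∞) ^ Module.finrank ℝ E * ∫⁻ y in k '' s, G y ∂μ := by
  have h_le : (μ.restrict s).map k ≤
      (K : ℝ≥0∞) ^ Module.finrank ℝ E • μ.restrict (k '' s) := by
    refine Measure.le_iff.2 fun t ht => ?_
    rw [Measure.smul_apply, smul_eq_mul, Measure.map_apply hk ht, Measure.restrict_apply ht,
      Measure.restrict_apply (hk ht), inter_comm t, inter_comm _ s, ← image_inter_preimage]
    calc μ (s ∩ k ⁻¹' t) = μ (h '' (k '' (s ∩ k ⁻¹' t))) := by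
          rw [(hhk.mono inter_subset_left).image_image]
      _ ≤ _ := addHaar_image_le_of_lipschitzOnWith (hh.mono (image_mono inter_subset_left))
  rw [← lintegral_map hG hk, ← smul_eq_mul, ← lintegral_smul_measure]
  exact lintegral_mono' h_le le_rfl

end LipschitzImages

section Degree

variable {E : Type*} [NormedAddCommGroup E] [NormedSpace ℝ E]

lemma bijective_add_of_lipschitzWith_lt_one [CompleteSpace E] {c : NNReal} (hc : c < 1)
    {u : E → E} (hu : LipschitzWith c u) : Function.Bijective fun x => x + u x := by
  have h_approx : ApproximatesLinearOn (fun x => x + u x)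
      (ContinuousLinearEquiv.refl ℝ E : E →L[ℝ] E) univ c := by
    refine ApproximatesLinearOn.approximatesLinearOn_iff_lipschitzOnWith.2
      (LipschitzWith.lipschitzOnWith ?_)
    simpa [Pi.sub_def] using hu
  have h_small : Subsingleton E ∨
      c < ‖((ContinuousLinearEquiv.refl ℝ E).symm : E →L[ℝ] E)‖₊⁻¹ := by
    rcases subsingleton_or_nontrivial E with hE | hE
    · exact .inl hE
    · refine .inr ?_
      simpa using hc
  exact ⟨injOn_univ.1 (h_approx.injOn h_small), h_approx.surjective h_small⟩

lemma image_eq_of_bijective_of_eqOn_compl {α : Type*} {g : α → α} (hg : Function.Bijective g)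
    {s : Set α} (hgs : EqOn g id sᶜ) : g '' s = s := by
  rw [← compl_inj_iff, ← image_compl_eq hg, hgs.image_eq, image_id]

lemma exists_forall_det_id_add_pos : ∃ η > 0, ∀ A : E →L[ℝ] E, ‖A‖ < η →
    0 < (ContinuousLinearMap.id ℝ E + A).det := by
  have h_cont : Continuous fun A : E →L[ℝ] E => (ContinuousLinearMap.id ℝ E + A).det :=
    ContinuousLinearMap.continuous_det.comp (by fun_prop)
  have h_pos : ∀ᶠ A in 𝓝 (0 : E →L[ℝ] E), 0 < (ContinuousLinearMap.id ℝ E + A).det :=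
    h_cont.continuousAt.eventually_const_lt (by simp [ContinuousLinearMap.det])
  obtain ⟨η, hη, h⟩ := Metric.eventually_nhds_iff.1 h_pos
  exact ⟨η, hη, fun A hA => h (by simpa using hA)⟩

variable [FiniteDimensional ℝ E]

lemma exists_polynomial_eval_eq_det_id_add_smul (A : E →L[ℝ] E) :
    ∃ p : Polynomial ℝ, p.degree < (Module.finrank ℝ E + 1 : ℕ) ∧
      ∀ t : ℝ, p.eval t = (ContinuousLinearMap.id ℝ E + t • A).det := by
  let b := Module.finBasis ℝ E
  let M := LinearMap.toMatrix b b A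
  refine ⟨((Polynomial.X : Polynomial ℝ) • M.map Polynomial.C +
    (1 : Matrix _ _ ℝ).map Polynomial.C).det, ?_, fun t => ?_⟩
  · have h_natDegree := Polynomial.natDegree_det_X_add_C_le M 1
    rw [Fintype.card_fin] at h_natDegree
    exact Polynomial.degree_le_natDegree.trans_lt
      (by exact_mod_cast Nat.lt_succ_of_le h_natDegree)
  · rw [ContinuousLinearMap.det, ← LinearMap.det_toMatrix b, ← Polynomial.coe_evalRingHom,
      RingHom.map_det]
    congr 1
    ext i j
    by_cases hij : i = j <;> simp [M, hij, LinearMap.toMatrix_apply] <;> ring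

lemma exists_eval_one_eq_sum_eval_small (m : ℕ) {ε : ℝ} (hε : 0 < ε) : ∃ v c : ℕ → ℝ,
    (∀ i, v i ∈ Ioc 0 ε) ∧ ∀ p : Polynomial ℝ, p.degree < (m : WithBot ℕ) →
      p.eval 1 = ∑ i ∈ Finset.range m, c i * p.eval (v i) := by
  let v : ℕ → ℝ := fun i => ε / (i + 1)
  refine ⟨v, fun i => (Lagrange.basis (Finset.range m) v i).eval 1, fun i => ⟨by positivity, ?_⟩,
    fun p hp => ?_⟩
  · exact div_le_self hε.le (by linarith [i.cast_nonneg (α := ℝ)])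
  · have h_inj : InjOn v (Finset.range m : Finset ℕ) := fun i _ j _ hij => by
      simpa [v, div_eq_mul_inv, hε.ne'] using hij
    have h_interp := Lagrange.eq_interpolate (f := p) h_inj (by simpa using hp)
    conv_lhs => rw [h_interp]
    rw [Lagrange.interpolate_apply, Polynomial.eval_finsetSum]
    exact Finset.sum_congr rfl fun i _ => by simp [mul_comm]

variable [MeasurableSpace E] [BorelSpace E] {μ : Measure E}

lemma integrableOn_det_id_add_smul_fderiv {K : NNReal} {u : E → E} (hu : LipschitzWith K u)
    {U : Set E} (hU : μ U ≠ ∞) (t : ℝ) :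
    IntegrableOn (fun x => (ContinuousLinearMap.id ℝ E + t • fderiv ℝ u x).det) U μ := by
  have : ProperSpace (E →L[ℝ] E) := FiniteDimensional.proper ℝ _
  have h_cont : Continuous fun A : E →L[ℝ] E => (ContinuousLinearMap.id ℝ E + t • A).det :=
    ContinuousLinearMap.continuous_det.comp (by fun_prop)
  obtain ⟨M, hM⟩ :=
    (isCompact_closedBall (0 : E →L[ℝ] E) K).exists_bound_of_continuousOn h_cont.continuousOn
  refine Measure.integrableOn_of_bounded (M := M) hU
    (h_cont.measurable.comp (measurable_fderiv ℝ u)).aestronglyMeasurable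
    (ae_of_all _ fun x => hM _ ?_)
  simpa using norm_fderiv_le_of_lipschitz ℝ hu (x₀ := x)

variable [μ.IsAddHaarMeasure]

lemma setIntegral_abs_det_fderiv_eq_measureReal_image {K : NNReal} {g : E → E}
    (hg : LipschitzWith K g) (h_inj : Function.Injective g) {s : Set E} (hs : MeasurableSet s) :
    ∫ x in s, |(fderiv ℝ g x).det| ∂μ = μ.real (g '' s) := by
  set D := {x | DifferentiableAt ℝ g x}
  have h_null : μ (s \ D) = 0 := measure_mono_null (fun x hx => hx.2) hg.ae_differentiableAt
  have h_img : (g '' (s ∩ D) : Set E) =ᵐ[μ] g '' s := by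
    refine (image_mono inter_subset_left).eventuallyLE.antisymm (ae_le_set.2 ?_)
    rw [← image_sdiff h_inj, sdiff_self_inter]
    have h_le := addHaar_image_le_of_lipschitzOnWith (μ := μ) (hg.lipschitzOnWith (s := s \ D))
    rwa [h_null, mul_zero, nonpos_iff_eq_zero] at h_le
  have h_dom : (s ∩ D : Set E) =ᵐ[μ] s :=
    inter_subset_left.eventuallyLE.antisymm (ae_le_set.2 (by rwa [sdiff_self_inter]))
  have h_area := integral_image_eq_integral_abs_det_fderiv_smul μ
    (hs.inter (measurableSet_of_differentiableAt ℝ g))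
    (fun x hx => hx.2.hasFDerivAt.hasFDerivWithinAt) h_inj.injOn fun _ => (1 : ℝ)
  rw [← setIntegral_congr_set h_dom, measureReal_congr h_img.symm]
  simpa using h_area.symm

lemma setIntegral_det_id_add_fderiv_eq_of_small : ∃ η > 0, ∀ {c : NNReal} {u : E → E} {U : Set E},
    c < η → LipschitzWith c u → MeasurableSet U → EqOn u 0 Uᶜ →
    ∫ x in U, (ContinuousLinearMap.id ℝ E + fderiv ℝ u x).det ∂μ = μ.real U := by
  obtain ⟨η, hη, h_pos⟩ := exists_forall_det_id_add_pos (E := E)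
  refine ⟨min η.toNNReal 1, by simpa using hη, fun {c u U} hc hu hU hu0 => ?_⟩
  have hcη : (c : ℝ) < η := Real.lt_toNNReal_iff_coe_lt.1 (hc.trans_le (min_le_left _ _))
  have h_bij := bijective_add_of_lipschitzWith_lt_one (hc.trans_le (min_le_right _ _)) hu
  have h_img := image_eq_of_bijective_of_eqOn_compl h_bij (s := U) fun x hx => by simp [hu0 hx]
  have h_area := setIntegral_abs_det_fderiv_eq_measureReal_image (μ := μ) (s := U)
    (g := fun x => x + u x) (LipschitzWith.id.add hu) h_bij.injective hU
  rw [h_img] at h_area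
  rw [← h_area]
  refine setIntegral_congr_ae hU ?_
  filter_upwards [hu.ae_differentiableAt] with x hx _
  have h_fderiv : fderiv ℝ (fun y => y + u y) x = ContinuousLinearMap.id ℝ E + fderiv ℝ u x :=
    ((hasFDerivAt_id x).add hx.hasFDerivAt).fderiv
  rw [h_fderiv, abs_of_pos]
  exact h_pos _ ((norm_fderiv_le_of_lipschitz ℝ hu).trans_lt hcη)

/- For small `t` the map `id + t • u` is a bijection of `U`, so the area formula gives the claim
for `t • u`; both sides are polynomials in `t`, hence they still agree at `t = 1`. -/
theorem setIntegral_det_id_add_fderiv_eq {K : NNReal} {u : E → E} (hu : LipschitzWith K u)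
    {U : Set E} (hU : MeasurableSet U) (hU_fin : μ U ≠ ∞) (hu0 : EqOn u 0 Uᶜ) :
    ∫ x in U, (ContinuousLinearMap.id ℝ E + fderiv ℝ u x).det ∂μ = μ.real U := by
  obtain ⟨η, hη, h_small⟩ := setIntegral_det_id_add_fderiv_eq_of_small (μ := μ)
  obtain ⟨ε, hε, hεK⟩ : ∃ ε : ℝ, 0 < ε ∧ ∀ t ∈ Ioc 0 ε, ‖t‖₊ * K < η := by
    refine ⟨η / (2 * (K + 1)), by positivity, fun t ht => ?_⟩
    rw [← NNReal.coe_lt_coe, NNReal.coe_mul, coe_nnnorm, Real.norm_of_nonneg ht.1.le]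
    have h_le : t * (2 * (K + 1)) ≤ η := (le_div_iff₀ (by positivity)).1 ht.2
    nlinarith [ht.1, mul_nonneg ht.1.le K.2]
  obtain ⟨v, c, hv, hc⟩ := exists_eval_one_eq_sum_eval_small (Module.finrank ℝ E + 1) hε
  have h_det (A : E →L[ℝ] E) : (ContinuousLinearMap.id ℝ E + A).det =
      ∑ i ∈ Finset.range (Module.finrank ℝ E + 1),
        c i * (ContinuousLinearMap.id ℝ E + v i • A).det := by
    obtain ⟨p, hp_deg, hp⟩ := exists_polynomial_eval_eq_det_id_add_smul A
    simpa [hp] using hc p hp_deg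
  have h_sum : ∑ i ∈ Finset.range (Module.finrank ℝ E + 1), c i = 1 := by
    simpa [ContinuousLinearMap.det] using (h_det 0).symm
  have h_node (i : ℕ) :
      ∫ x in U, (ContinuousLinearMap.id ℝ E + v i • fderiv ℝ u x).det ∂μ = μ.real U := by
    have h_lip : LipschitzWith (‖v i‖₊ * K) (v i • u) := (lipschitzWith_smul (v i)).comp hu
    rw [← h_small (hεK _ (hv i)) h_lip hU fun x hx => by simp [hu0 hx]]
    simp only [fderiv_const_smul_field, Pi.smul_apply]
  rw [setIntegral_congr_fun hU fun x _ => h_det (fderiv ℝ u x),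
    integral_finsetSum _ fun i _ =>
    (integrableOn_det_id_add_smul_fderiv hu hU_fin (v i)).const_mul (c i)]
  simp_rw [integral_const_mul, h_node, ← Finset.sum_mul, h_sum, one_mul]

end Degree

section InvarianceOfDomain

lemma inter_frontier_nonempty_of_isPreconnected {X : Type*} [TopologicalSpace X] {s t : Set X}
    (ht : IsPreconnected t) (h_inter : (t ∩ s).Nonempty) (h_diff : (t \ s).Nonempty) :
    (t ∩ frontier s).Nonempty := by
  by_contra! h_empty
  have h_int : (t ∩ interior s).Nonempty := by
    obtain ⟨x, hxt, hxs⟩ := h_inter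
    exact ⟨x, hxt, by_contra fun hx => h_empty.subset ⟨hxt, subset_closure hxs, hx⟩⟩
  obtain ⟨y, hyt, hys⟩ := h_diff
  refine hys (interior_subset (ht.subset_of_closure_inter_subset isOpen_interior h_int ?_ hyt))
  rintro z ⟨hz, hzt⟩
  exact by_contra fun hz' => h_empty.subset ⟨hzt, closure_mono interior_subset hz, hz'⟩

lemma lipschitzWith_indicator_of_eqOn_frontier {E F : Type*} [NormedAddCommGroup E]
    [NormedSpace ℝ E] [SeminormedAddCommGroup F] {K : NNReal} {f : E → F} {s : Set E}
    (hf : LipschitzOnWith K f (closure s)) (hf0 : EqOn f 0 (frontier s)) :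
    LipschitzWith K (s.indicator f) := by
  have h_mixed {x y : E} (hx : x ∈ s) (hy : y ∉ s) : dist (f x) 0 ≤ K * dist x y := by
    obtain ⟨z, hz_seg, hz⟩ := inter_frontier_nonempty_of_isPreconnected
      (convex_segment x y).isPreconnected ⟨x, left_mem_segment ℝ x y, hx⟩
      ⟨y, right_mem_segment ℝ x y, hy⟩
    calc dist (f x) 0 = dist (f x) (f z) := by rw [hf0 hz, Pi.zero_apply]
      _ ≤ K * dist x z := hf.dist_le_mul x (subset_closure hx) z (frontier_subset_closure hz)
      _ ≤ K * dist x y := by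
        gcongr
        linarith [dist_add_dist_of_mem_segment hz_seg, dist_nonneg (x := z) (y := y)]
  refine LipschitzWith.of_dist_le_mul fun x y => ?_
  by_cases hx : x ∈ s <;> by_cases hy : y ∈ s
  · simpa [hx, hy] using hf.dist_le_mul x (subset_closure hx) y (subset_closure hy)
  · simpa [hx, hy] using h_mixed hx hy
  · simpa [hx, hy, dist_comm] using h_mixed hy hx
  · simp only [indicator_of_notMem hx, indicator_of_notMem hy, dist_self]
    positivity

lemma norm_apply_le_of_hasFDerivAt_comp_lipschitzWith {E F G : Type*} [NormedAddCommGroup E]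
    [NormedSpace ℝ E] [NormedAddCommGroup F] [NormedSpace ℝ F] [NormedAddCommGroup G]
    [NormedSpace ℝ G] {K : NNReal} {k : F → G} (hk : LipschitzWith K k) {f : E → F} {x : E}
    {f' : E →L[ℝ] F} {g' : E →L[ℝ] G} (hf : HasFDerivAt f f' x)
    (hg : HasFDerivAt (fun y => k (f y)) g' x) (v : E) : ‖g' v‖ ≤ K * ‖f' v‖ := by
  refine le_of_tendsto_of_tendsto (hg.hasLineDerivAt v).tendsto_slope_zero.norm
    ((hf.hasLineDerivAt v).tendsto_slope_zero.norm.const_mul (K : ℝ)) (.of_forall fun t => ?_)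
  simp only [norm_smul, ← dist_eq_norm, mul_left_comm (K : ℝ)]
  gcongr
  exact hk.dist_le_mul _ _

section RadialProjection

variable {E : Type*} [NormedAddCommGroup E] [NormedSpace ℝ E]

/-- The radial projection onto the sphere of centre `c` and radius `ε`, of value `c` at `c`. -/
noncomputable def radialProj (c : E) (ε : ℝ) (y : E) : E :=
  c + (ε / ‖y - c‖) • (y - c)

lemma radialProj_mem_sphere {c y : E} {ε : ℝ} (hε : 0 ≤ ε) (hy : y ≠ c) :
    radialProj c ε y ∈ Metric.sphere c ε := by
  have hy0 : 0 < ‖y - c‖ := norm_pos_iff.2 (sub_ne_zero.2 hy)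
  rw [mem_sphere_iff_norm, radialProj, add_sub_cancel_left, norm_smul,
    Real.norm_of_nonneg (by positivity), div_mul_cancel₀ _ hy0.ne']

lemma radialProj_eq_self {c y : E} {ε : ℝ} (hε : ε ≠ 0) (hy : y ∈ Metric.sphere c ε) :
    radialProj c ε y = y := by
  rw [radialProj, mem_sphere_iff_norm.1 hy, div_self hε, one_smul, add_sub_cancel]

lemma exists_lipschitzOnWith_radialProj (c : E) {ε ρ : ℝ} (hε : 0 ≤ ε) (hρ : 0 < ρ) :
    ∃ K : NNReal, LipschitzOnWith K (radialProj c ε) {y | ρ ≤ dist y c} := by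
  refine ⟨(2 * (ε / ρ)).toNNReal, LipschitzOnWith.of_dist_le_mul fun x hx y hy => ?_⟩
  rw [mem_ofPred_eq, dist_eq_norm] at hx hy
  set a := x - c
  set b := y - c
  have ha : 0 < ‖a‖ := hρ.trans_le hx
  have hb : 0 < ‖b‖ := hρ.trans_le hy
  have h_radius : |ε / ‖a‖ - ε / ‖b‖| * ‖b‖ ≤ ε / ‖a‖ * ‖a - b‖ := by
    have h_eq : ε / ‖a‖ - ε / ‖b‖ = ε / ‖a‖ / ‖b‖ * (‖b‖ - ‖a‖) := by field_simp
    rw [h_eq, abs_mul, abs_of_nonneg (by positivity), mul_right_comm, div_mul_cancel₀ _ hb.ne',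
      abs_sub_comm]
    gcongr
    exact abs_norm_sub_norm_le a b
  calc dist (radialProj c ε x) (radialProj c ε y)
      = ‖(ε / ‖a‖) • (a - b) + (ε / ‖a‖ - ε / ‖b‖) • b‖ := by
        rw [radialProj, radialProj, dist_add_left, dist_eq_norm]
        congr 1
        module
    _ ≤ ε / ‖a‖ * ‖a - b‖ + |ε / ‖a‖ - ε / ‖b‖| * ‖b‖ := by
        refine (norm_add_le _ _).trans_eq ?_
        rw [norm_smul, norm_smul, Real.norm_of_nonneg (by positivity), Real.norm_eq_abs]
    _ ≤ 2 * (ε / ‖a‖) * ‖a - b‖ := by linarith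
    _ ≤ 2 * (ε / ρ) * ‖a - b‖ := by gcongr
    _ = (2 * (ε / ρ)).toNNReal * dist x y := by
        rw [Real.coe_toNNReal _ (by positivity), dist_eq_norm, sub_sub_sub_cancel_right]

end RadialProjection

variable {E : Type*} [NormedAddCommGroup E] [InnerProductSpace ℝ E] [FiniteDimensional ℝ E]

lemma det_fderiv_eq_zero_of_eventually_mem_sphere {f : E → E} {x c : E}
    {ε : ℝ} (hε : ε ≠ 0) (hf : DifferentiableAt ℝ f x)
    (hfs : ∀ᶠ z in 𝓝 x, f z ∈ Metric.sphere c ε) : (fderiv ℝ f x).det = 0 := by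
  by_contra h_det
  have h_unit : IsUnit (fderiv ℝ f x : E →ₗ[ℝ] E) :=
    (LinearMap.isUnit_iff_isUnit_det _).2 (isUnit_iff_ne_zero.2 h_det)
  obtain ⟨v, hv⟩ : ∃ v, fderiv ℝ f x v = f x - c := ((Module.End.isUnit_iff _).1 h_unit).2 _
  have h_const : (fun z => ⟪f z - c, f z - c⟫) =ᶠ[𝓝 x] fun _ => ε ^ 2 := by
    filter_upwards [hfs] with z hz
    rw [real_inner_self_eq_norm_sq, mem_sphere_iff_norm.1 hz]
  have h_sub : HasFDerivAt (fun z => f z - c) (fderiv ℝ f x) x := hf.hasFDerivAt.sub_const c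
  have h_inner := ((h_sub.inner ℝ h_sub).congr_of_eventuallyEq h_const.symm).unique
    (hasFDerivAt_const (ε ^ 2) x)
  have h_zero : ‖f x - c‖ = 0 := by
    simpa [fderivInnerCLM_apply, hv] using congrArg (fun T : E →L[ℝ] ℝ => T v) h_inner
  exact hε (by rw [← mem_sphere_iff_norm.1 hfs.self_of_nhds, h_zero])

lemma det_fderiv_comp_eq_zero_of_eventually_mem_sphere {K : NNReal} {k f : E → E}
    (hk : LipschitzWith K k) {x c : E} {ε : ℝ} (hε : ε ≠ 0) (hf : DifferentiableAt ℝ f x)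
    (hkf : DifferentiableAt ℝ (fun y => k (f y)) x)
    (hfs : ∀ᶠ z in 𝓝 x, f z ∈ Metric.sphere c ε) :
    (fderiv ℝ (fun y => k (f y)) x).det = 0 := by
  have h_det := det_fderiv_eq_zero_of_eventually_mem_sphere hε hf hfs
  refine LinearMap.det_eq_zero_iff_ker_ne_bot.2 fun h_ker => ?_
  refine LinearMap.det_eq_zero_iff_ker_ne_bot.1 h_det (LinearMap.ker_eq_bot'.2 fun v hv => ?_)
  have h_le := norm_apply_le_of_hasFDerivAt_comp_lipschitzWith hk hf.hasFDerivAt hkf.hasFDerivAt v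
  rw [← ContinuousLinearMap.coe_coe (fderiv ℝ f x), hv, norm_zero, mul_zero, norm_le_zero_iff]
    at h_le
  exact LinearMap.ker_eq_bot'.1 h_ker v h_le

/- If `A` were nonempty, `x ↦ k (f x)` would be a Lipschitz map that is the identity on the
frontier of `A`, so its Jacobian would have integral `volume A > 0`; but the Jacobian vanishes
because `f` takes values in a sphere. -/
theorem eq_empty_of_mapsTo_sphere_of_leftInvOn_frontier {K K' : NNReal} {f k : E → E}
    {A : Set E} (hA : IsOpen A) (hA_bdd : Bornology.IsBounded A)
    (hf : LipschitzOnWith K f (closure A)) (hk : LipschitzWith K' k) {c : E} {ε : ℝ} (hε : ε ≠ 0)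
    (hfs : MapsTo f A (Metric.sphere c ε)) (hkf : LeftInvOn k f (frontier A)) : A = ∅ := by
  borelize E
  let u : E → E := A.indicator fun x => k (f x) - x
  have hu : LipschitzWith (K' * K + 1) u :=
    lipschitzWith_indicator_of_eqOn_frontier
      ((hk.comp_lipschitzOnWith hf).sub LipschitzWith.id.lipschitzOnWith)
      fun x hx => by simp [hkf hx]
  have h_det : ∀ᵐ x ∂(volume : Measure E), x ∈ A →
      (ContinuousLinearMap.id ℝ E + fderiv ℝ u x).det = 0 := by
    filter_upwards [hu.ae_differentiableAt,
      (hf.mono subset_closure).ae_differentiableWithinAt_of_mem] with x hux hfx hxA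
    have h_eq : (fun y => k (f y)) =ᶠ[𝓝 x] fun y => y + u y := by
      filter_upwards [hA.mem_nhds hxA] with y hy
      simp [u, hy]
    have h_fderiv : HasFDerivAt (fun y => k (f y))
        (ContinuousLinearMap.id ℝ E + fderiv ℝ u x) x :=
      ((hasFDerivAt_id x).add hux.hasFDerivAt).congr_of_eventuallyEq h_eq
    rw [← h_fderiv.fderiv]
    exact det_fderiv_comp_eq_zero_of_eventually_mem_sphere hk hε
      ((hfx hxA).differentiableAt (hA.mem_nhds hxA)) h_fderiv.differentiableAt
      (mem_of_superset (hA.mem_nhds hxA) hfs)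
  have h_degree := setIntegral_det_id_add_fderiv_eq (μ := volume) hu hA.measurableSet
    hA_bdd.measure_lt_top.ne fun x hx => indicator_of_notMem hx _
  rw [setIntegral_congr_ae hA.measurableSet h_det, integral_zero, eq_comm,
    measureReal_eq_zero_iff hA_bdd.measure_lt_top.ne] at h_degree
  exact (hA.measure_eq_zero_iff volume).1 h_degree

lemma mem_image_closedBall_of_forall_sphere_le_dist {K K' : NNReal} {h k : E → E} {p c : E}
    {r ε : ℝ} (hr : 0 < r) (hh : LipschitzOnWith K h (Metric.closedBall p r))
    (hk : LipschitzWith K' k) (hkh : LeftInvOn k h (Metric.closedBall p r))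
    (hp : dist (h p) c < ε) (h_far : ∀ x ∈ Metric.sphere p r, ε ≤ dist (h x) c) :
    c ∈ h '' Metric.closedBall p r := by
  have hε : 0 < ε := dist_nonneg.trans_lt hp
  have h_cont : ContinuousOn (fun x => dist (h x) c) (Metric.closedBall p r) :=
    continuous_id.dist continuous_const |>.comp_continuousOn hh.continuousOn
  by_contra hc
  obtain ⟨ρ, hρ, hρh⟩ : ∃ ρ > 0, ∀ x ∈ Metric.closedBall p r, ρ ≤ dist (h x) c := by
    obtain ⟨x₀, hx₀, h_min⟩ := (isCompact_closedBall p r).exists_isMinOn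
      ⟨p, Metric.mem_closedBall_self hr.le⟩ h_cont
    exact ⟨_, dist_pos.2 fun h_eq => hc ⟨x₀, hx₀, h_eq⟩, h_min⟩
  let A := Metric.ball p r ∩ {x | dist (h x) c < ε}
  have hA_open : IsOpen A :=
    (h_cont.mono Metric.ball_subset_closedBall).isOpen_inter_preimage Metric.isOpen_ball isOpen_Iio
  have hA_closure : closure A ⊆ Metric.closedBall p r :=
    (closure_mono inter_subset_left).trans Metric.closure_ball_subset_closedBall
  have hA_frontier {x : E} (hx : x ∈ frontier A) : dist (h x) c = ε := by
    have hx_closure := frontier_subset_closure hx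
    refine le_antisymm ?_ (le_of_not_gt fun h_lt => ?_)
    · exact ((h_cont.mono hA_closure x hx_closure).mono subset_closure).closure_le hx_closure
        continuousWithinAt_const fun y hy => hy.2.le
    · refine (hA_open.frontier_eq ▸ hx).2 ⟨?_, h_lt⟩
      exact (hA_closure hx_closure).lt_of_ne fun h_eq => h_lt.not_ge (h_far x h_eq)
  obtain ⟨L, hL⟩ := exists_lipschitzOnWith_radialProj c hε.le hρ
  have h_empty := eq_empty_of_mapsTo_sphere_of_leftInvOn_frontier hA_open
    (Metric.isBounded_ball.subset inter_subset_left)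
    (hL.comp (hh.mono hA_closure) fun x hx => hρh x (hA_closure hx)) hk hε.ne'
    (fun x hx => radialProj_mem_sphere hε.le
      (dist_pos.1 (hρ.trans_le (hρh x (Metric.ball_subset_closedBall hx.1)))))
    fun x hx => by
      rw [Function.comp_apply, radialProj_eq_self hε.ne' (hA_frontier hx),
        hkh (hA_closure (frontier_subset_closure hx))]
  exact h_empty.subset ⟨Metric.mem_ball_self hr, hp⟩

theorem image_mem_nhds_of_lipschitzOnWith_of_leftInvOn {K K' : NNReal} {h k : E → E} {p : E}
    {U : Set E} (hU : U ∈ 𝓝 p) (hh : LipschitzOnWith K h U) (hk : LipschitzWith K' k)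
    (hkh : LeftInvOn k h U) : h '' U ∈ 𝓝 (h p) := by
  obtain ⟨r, hr, hrU⟩ := Metric.nhds_basis_closedBall.mem_iff.1 hU
  obtain ⟨ε, hε, hεr⟩ : ∃ ε > 0, K' * (2 * ε) < r := by
    refine ⟨r / (2 * K' + 1), by positivity, ?_⟩
    rw [← mul_assoc, mul_div_assoc', div_lt_iff₀ (by positivity)]
    nlinarith
  refine mem_of_superset (Metric.ball_mem_nhds _ hε) fun c hc => image_mono hrU ?_
  rw [Metric.mem_ball'] at hc
  refine mem_image_closedBall_of_forall_sphere_le_dist hr (hh.mono hrU) hk (hkh.mono hrU) hc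
    fun x hx => le_of_not_gt fun h_lt => ?_
  have h_hx : dist (h x) (h p) ≤ 2 * ε := by linarith [dist_triangle_right (h x) (h p) c]
  have h_kx := hk.dist_le_mul (h x) (h p)
  rw [hkh (hrU (Metric.sphere_subset_closedBall hx)), hkh (mem_of_mem_nhds hU),
    Metric.mem_sphere.1 hx] at h_kx
  nlinarith [mul_le_mul_of_nonneg_left h_hx K'.2]

end InvarianceOfDomain

section ConvexPoincare

lemma enorm_sub_le_lintegral_enorm_deriv {f : ℝ → ℝ} {K : NNReal}
    (hf : LipschitzOnWith K f (Icc 0 1)) : ‖f 1 - f 0‖ₑ ≤ ∫⁻ t in Ioc 0 1, ‖deriv f t‖ₑ := by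
  have h_ac : AbsolutelyContinuousOnInterval f 0 1 :=
    LipschitzOnWith.absolutelyContinuousOnInterval (by rwa [uIcc_of_le zero_le_one])
  rw [← h_ac.integral_deriv_eq_sub, intervalIntegral.integral_of_le zero_le_one]
  exact enorm_integral_le_lintegral_enorm _

lemma enorm_sub_le_lintegral_enorm_fderiv {E : Type*} [NormedAddCommGroup E] [NormedSpace ℝ E]
    [FiniteDimensional ℝ E] {f : E → ℝ} (hf : ContDiff ℝ 1 f) {γ : ℝ → E} {K : NNReal}
    (hγ : LipschitzWith K γ) :
    ‖f (γ 1) - f (γ 0)‖ₑ ≤ K * ∫⁻ t in Ioc (0 : ℝ) 1, ‖fderiv ℝ f (γ t)‖ₑ := by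
  obtain ⟨L, hL⟩ := hf.locallyLipschitz.locallyLipschitzOn.exists_lipschitzOnWith_of_compact
    (isCompact_Icc.image hγ.continuous)
  have h_lip : LipschitzOnWith (L * K) (fun t => f (γ t)) (Icc 0 1) :=
    hL.comp hγ.lipschitzOnWith (mapsTo_image γ _)
  refine (enorm_sub_le_lintegral_enorm_deriv h_lip).trans ?_
  rw [← lintegral_const_mul' _ _ ENNReal.coe_ne_top]
  refine lintegral_mono_ae (ae_restrict_of_ae ?_)
  filter_upwards [hγ.ae_differentiableAt_real] with t ht
  have h_deriv : HasDerivAt (fun s => f (γ s)) (fderiv ℝ f (γ t) (deriv γ t)) t :=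
    (hf.differentiable one_ne_zero (γ t)).hasFDerivAt.comp_hasDerivAt t ht.hasDerivAt
  rw [h_deriv.deriv, mul_comm]
  refine (ContinuousLinearMap.le_opENorm _ _).trans ?_
  gcongr
  exact enorm_le_coe.2 (norm_deriv_le_of_lipschitz hγ)

variable {E : Type*} [NormedAddCommGroup E] [NormedSpace ℝ E] [FiniteDimensional ℝ E]
  [MeasurableSpace E] [BorelSpace E] {μ : Measure E} [μ.IsAddHaarMeasure]

lemma setLIntegral_comp_lineMap_le {C : Set E} (hC : Convex ℝ C) {G : E → ℝ≥0∞}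
    (hG : Measurable G) {t : ℝ} (ht : t ∈ Icc (1 / 2) 1) {x : E} (hx : x ∈ C) :
    ∫⁻ y in C, G (AffineMap.lineMap x y t) ∂μ ≤ 2 ^ Module.finrank ℝ E * ∫⁻ y in C, G y ∂μ := by
  have ht0 : 0 < t := by linarith [ht.1]
  let k : E → E := AffineMap.homothety x t
  have hk : Continuous k := AffineMap.homothety_continuous x t
  have h_inv : LipschitzWith 2 (AffineMap.homothety x t⁻¹ : E → E) := by
    refine LipschitzWith.of_dist_le_mul fun y z => ?_
    have h_le : t⁻¹ ≤ 2 := by simpa using inv_anti₀ (by norm_num) ht.1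
    simp only [AffineMap.homothety_apply, vsub_eq_sub, vadd_eq_add, dist_add_right, dist_smul₀,
      dist_sub_right, Real.norm_of_nonneg (inv_nonneg.2 ht0.le)]
    exact mul_le_mul_of_nonneg_right h_le dist_nonneg
  have h_left : LeftInvOn (AffineMap.homothety x t⁻¹) k C := fun y _ => by
    simp [k, AffineMap.homothety_apply, smul_smul, ht0.ne']
  have h_image : k '' C ⊆ C := by
    rintro _ ⟨y, hy, rfl⟩
    exact hC.lineMap_mem hx hy ⟨ht0.le, ht.2⟩
  calc ∫⁻ y in C, G (AffineMap.lineMap x y t) ∂μ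
      ≤ 2 ^ Module.finrank ℝ E * ∫⁻ y in k '' C, G y ∂μ :=
        setLIntegral_comp_le_of_lipschitzOnWith_leftInvOn hk.measurable h_inv.lipschitzOnWith
          h_left hG
    _ ≤ _ := by gcongr

lemma setLIntegral_setLIntegral_comp_lineMap_le {C : Set E} (hC : Convex ℝ C)
    (hC_meas : MeasurableSet C) {G : E → ℝ≥0∞} (hG : Measurable G) {t : ℝ} (ht : t ∈ Icc 0 1) :
    ∫⁻ x in C, ∫⁻ y in C, G (AffineMap.lineMap x y t) ∂μ ∂μ ≤
      2 ^ Module.finrank ℝ E * μ C * ∫⁻ y in C, G y ∂μ := by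
  have h_late {s : ℝ} (hs : s ∈ Icc (1 / 2) 1) :
      ∫⁻ x in C, ∫⁻ y in C, G (AffineMap.lineMap x y s) ∂μ ∂μ ≤
        2 ^ Module.finrank ℝ E * μ C * ∫⁻ y in C, G y ∂μ := by
    refine (setLIntegral_mono' hC_meas fun x hx =>
      setLIntegral_comp_lineMap_le hC hG hs hx).trans_eq ?_
    rw [setLIntegral_const, mul_right_comm]
  rcases le_total (1 / 2) t with h_half | h_half
  · exact h_late ⟨h_half, ht.2⟩
  · have h_meas : Measurable fun p : E × E => G (AffineMap.lineMap p.1 p.2 t) := by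
      simp only [AffineMap.lineMap_apply_module]
      fun_prop
    rw [lintegral_lintegral_swap h_meas.aemeasurable]
    simp_rw [← AffineMap.lineMap_apply_one_sub _ _ t]
    exact h_late ⟨by linarith, by linarith [ht.1]⟩

theorem setLIntegral_setLIntegral_le_of_le_lintegral_lineMap {C : Set E} (hC : Convex ℝ C)
    (hC_meas : MeasurableSet C) {G : E → ℝ≥0∞} (hG : Measurable G) {A : NNReal}
    {H : E → E → ℝ≥0∞}
    (hH : ∀ x ∈ C, ∀ y ∈ C, H x y ≤ A * ∫⁻ t in Ioc (0 : ℝ) 1, G (AffineMap.lineMap x y t)) :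
    ∫⁻ x in C, ∫⁻ y in C, H x y ∂μ ∂μ ≤
      A * (2 ^ Module.finrank ℝ E * μ C * ∫⁻ y in C, G y ∂μ) := by
  have h_meas : Measurable fun p : (E × ℝ) × E => G (AffineMap.lineMap p.1.1 p.2 p.1.2) := by
    simp only [AffineMap.lineMap_apply_module]
    fun_prop
  have h_meas_swap (x : E) : Measurable fun p : E × ℝ => G (AffineMap.lineMap x p.1 p.2) :=
    h_meas.comp (f := fun p : E × ℝ => ((x, p.2), p.1)) (by fun_prop)
  calc ∫⁻ x in C, ∫⁻ y in C, H x y ∂μ ∂μ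
      ≤ ∫⁻ x in C, ∫⁻ y in C, A * (∫⁻ t in Ioc (0 : ℝ) 1, G (AffineMap.lineMap x y t)) ∂μ ∂μ :=
        setLIntegral_mono' hC_meas fun x hx => setLIntegral_mono' hC_meas fun y hy => hH x hx y hy
    _ = A * ∫⁻ x in C, (∫⁻ t in Ioc (0 : ℝ) 1, ∫⁻ y in C, G (AffineMap.lineMap x y t) ∂μ) ∂μ := by
        simp_rw [lintegral_const_mul' _ _ ENNReal.coe_ne_top]
        congr 2 with x
        exact lintegral_lintegral_swap (h_meas_swap x).aemeasurable
    _ = A * ∫⁻ t in Ioc (0 : ℝ) 1, ∫⁻ x in C, ∫⁻ y in C, G (AffineMap.lineMap x y t) ∂μ ∂μ := by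
        rw [lintegral_lintegral_swap h_meas.lintegral_prod_right'.aemeasurable]
    _ ≤ A * ∫⁻ _ in Ioc (0 : ℝ) 1, 2 ^ Module.finrank ℝ E * μ C * ∫⁻ y in C, G y ∂μ := by
        gcongr A * ?_
        exact setLIntegral_mono' measurableSet_Ioc fun t ht =>
          setLIntegral_setLIntegral_comp_lineMap_le hC hC_meas hG (Ioc_subset_Icc_self ht)
    _ = _ := by simp

end ConvexPoincare

section PairDeviation

variable {α : Type*} [MeasurableSpace α] {μ : Measure α} {u : α → ℝ}

/-- The double integral `∫_A ∫_A |u x - u y| dx dy`, which measures how far `u` is from being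
constant on `A`. -/
noncomputable def pairDeviation (μ : Measure α) (A : Set α) (u : α → ℝ) : ℝ≥0∞ :=
  ∫⁻ p in A ×ˢ A, ‖u p.1 - u p.2‖ₑ ∂μ.prod μ

lemma pairDeviation_eq_lintegral_lintegral [SFinite μ] {A : Set α}
    (hu : AEMeasurable u (μ.restrict A)) :
    pairDeviation μ A u = ∫⁻ x in A, ∫⁻ y in A, ‖u x - u y‖ₑ ∂μ ∂μ := by
  rw [pairDeviation, ← Measure.prod_restrict,
    lintegral_prod (fun p => ‖u p.1 - u p.2‖ₑ) (hu.comp_fst.sub hu.comp_snd).enorm]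

lemma pairDeviation_le_liminf {A : Set α} (hA : MeasurableSet A) {f : ℕ → α → ℝ}
    (hf : ∀ j, Measurable (f j))
    (h_lim : ∀ᵐ x ∂μ, x ∈ A → Tendsto (fun j => f j x) atTop (𝓝 (u x))) :
    pairDeviation μ A u ≤ liminf (fun j => pairDeviation μ A (f j)) atTop := by
  have h_fst := Measure.quasiMeasurePreserving_fst (μ := μ) (ν := μ) |>.ae h_lim
  have h_snd := Measure.quasiMeasurePreserving_snd (μ := μ) (ν := μ) |>.ae h_lim
  calc pairDeviation μ A u
      = ∫⁻ p in A ×ˢ A, liminf (fun j => ‖f j p.1 - f j p.2‖ₑ) atTop ∂μ.prod μ := by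
        refine setLIntegral_congr_fun_ae (hA.prod hA) ?_
        filter_upwards [h_fst, h_snd] with p hp_fst hp_snd hp
        exact (((hp_fst hp.1).sub (hp_snd hp.2)).enorm.liminf_eq).symm
    _ ≤ _ := lintegral_liminf_le fun j => by
        have := hf j
        fun_prop

end PairDeviation

section WeakDerivatives

variable {E : Type*} [NormedAddCommGroup E] [NormedSpace ℝ E] [MeasurableSpace E]
  {μ : Measure E} {Ω : Set E} {u : E → ℝ} {g : E → E →L[ℝ] ℝ}

/-- `u ∈ W^{1,1}(Ω)` with weak derivative `g`: the scalar, coordinate-free form of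
`HasWeakDerivOn`. -/
structure HasWeakFDerivOn (μ : Measure E) (Ω : Set E) (u : E → ℝ) (g : E → E →L[ℝ] ℝ) :
    Prop where
  integrableOn : IntegrableOn u Ω μ
  integrableOn_fderiv : IntegrableOn g Ω μ
  setIntegral_smul_fderiv_eq : ∀ φ : E → ℝ, ContDiff ℝ 1 φ → HasCompactSupport φ →
    tsupport φ ⊆ Ω → ∫ x in Ω, u x • fderiv ℝ φ x ∂μ = -∫ x in Ω, φ x • g x ∂μ

variable [FiniteDimensional ℝ E] [BorelSpace E]

/-- The mollification of `f`, that is, its convolution with the normalized bump function `b`. -/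
noncomputable def mollify (μ : Measure E) (b : ContDiffBump (0 : E)) (f : E → ℝ) : E → ℝ :=
  convolution (b.normed μ) f (ContinuousLinearMap.lsmul ℝ ℝ) μ

variable [μ.IsAddHaarMeasure] (b : ContDiffBump (0 : E))

lemma contDiff_mollify {f : E → ℝ} (hf : LocallyIntegrable f μ) : ContDiff ℝ 1 (mollify μ b f) :=
  b.hasCompactSupport_normed.contDiff_convolution_left _ b.contDiff_normed hf

lemma fderiv_mollify {f : E → ℝ} (hf : LocallyIntegrable f μ) (x : E) :
    fderiv ℝ (mollify μ b f) x = ∫ t, f t • fderiv ℝ (b.normed μ) (x - t) ∂μ := by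
  have h_conv := b.hasCompactSupport_normed (μ := μ) |>.hasFDerivAt_convolution_left
    (ContinuousLinearMap.lsmul ℝ ℝ) b.contDiff_normed hf x
  rw [mollify, h_conv.fderiv, convolution_eq_swap]
  congr 1 with t v
  simp [mul_comm]

lemma fderiv_mollify_indicator (hΩ : MeasurableSet Ω) (hu : HasWeakFDerivOn μ Ω u g) {x : E}
    (hx : Metric.closedBall x b.rOut ⊆ Ω) :
    fderiv ℝ (mollify μ b (Ω.indicator u)) x = ∫ t in Ω, b.normed μ (x - t) • g t ∂μ := by
  let ψ : E → ℝ := fun t => b.normed μ (x - t)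
  have hb : ContDiff ℝ 1 (b.normed μ) := b.contDiff_normed
  have h_fderiv (t : E) : fderiv ℝ ψ t = -fderiv ℝ (b.normed μ) (x - t) := by
    have h : HasFDerivAt ψ _ t := (hb.differentiable one_ne_zero (x - t)).hasFDerivAt.comp t
      ((hasFDerivAt_id t).const_sub x)
    rw [h.fderiv]
    ext v
    simp
  have h_supp : Function.support ψ ⊆ Metric.closedBall x b.rOut := fun t ht => by
    have h_mem : x - t ∈ Function.support (b.normed μ) := ht
    rw [b.support_normed_eq, mem_ball_zero_iff] at h_mem
    rw [Metric.mem_closedBall, dist_comm, dist_eq_norm]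
    exact h_mem.le
  have h_weak := hu.setIntegral_smul_fderiv_eq ψ (hb.comp (contDiff_const.sub contDiff_id))
    (.of_support_subset_isCompact (isCompact_closedBall _ _) h_supp)
    ((closure_minimal h_supp Metric.isClosed_closedBall).trans hx)
  simp only [h_fderiv, smul_neg, integral_neg, neg_inj] at h_weak
  rw [fderiv_mollify b (hu.integrableOn.integrable_indicator hΩ).locallyIntegrable, ← h_weak,
    ← integral_indicator hΩ]
  congr 1 with t : 1
  by_cases ht : t ∈ Ω <;> simp [ht]

lemma lintegral_enorm_normed_sub (t : E) : ∫⁻ x, ‖b.normed μ (x - t)‖ₑ ∂μ = 1 := by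
  rw [lintegral_sub_right_eq_self (fun x => ‖b.normed μ x‖ₑ) t,
    ← ofReal_integral_norm_eq_lintegral_enorm b.integrable_normed]
  simp [Real.norm_of_nonneg (b.nonneg_normed _), b.integral_normed]

lemma setLIntegral_enorm_fderiv_mollify_le (hΩ : MeasurableSet Ω) (hu : HasWeakFDerivOn μ Ω u g)
    {S : Set E} (hS : MeasurableSet S) (hSΩ : ∀ x ∈ S, Metric.closedBall x b.rOut ⊆ Ω) :
    ∫⁻ x in S, ‖fderiv ℝ (mollify μ b (Ω.indicator u)) x‖ₑ ∂μ ≤ ∫⁻ x in Ω, ‖g x‖ₑ ∂μ := by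
  have hb : Continuous (b.normed μ) := b.continuous_normed
  have h_meas : AEMeasurable (fun p : E × E => ‖b.normed μ (p.1 - p.2)‖ₑ * ‖g p.2‖ₑ)
      (μ.prod (μ.restrict Ω)) :=
    (by fun_prop : Continuous fun p : E × E => ‖b.normed μ (p.1 - p.2)‖ₑ).aemeasurable.mul
      hu.integrableOn_fderiv.aestronglyMeasurable.comp_snd.enorm
  calc ∫⁻ x in S, ‖fderiv ℝ (mollify μ b (Ω.indicator u)) x‖ₑ ∂μ
      ≤ ∫⁻ x in S, ∫⁻ t in Ω, ‖b.normed μ (x - t)‖ₑ * ‖g t‖ₑ ∂μ ∂μ := by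
        refine setLIntegral_mono' hS fun x hx => ?_
        rw [fderiv_mollify_indicator b hΩ hu (hSΩ x hx)]
        simpa only [enorm_smul] using enorm_integral_le_lintegral_enorm (μ := μ.restrict Ω)
          fun t => b.normed μ (x - t) • g t
    _ ≤ ∫⁻ x, ∫⁻ t in Ω, ‖b.normed μ (x - t)‖ₑ * ‖g t‖ₑ ∂μ ∂μ := setLIntegral_le_lintegral _ _
    _ = ∫⁻ t in Ω, (∫⁻ x, ‖b.normed μ (x - t)‖ₑ ∂μ) * ‖g t‖ₑ ∂μ := by
        rw [lintegral_lintegral_swap h_meas]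
        congr 1 with t
        exact lintegral_mul_const _
          (by fun_prop : Continuous fun x => ‖b.normed μ (x - t)‖ₑ).measurable
    _ = ∫⁻ x in Ω, ‖g x‖ₑ ∂μ := by simp only [lintegral_enorm_normed_sub, one_mul]

lemma exists_contDiffBump_seq_tendsto {δ : ℝ} (hδ : 0 < δ) :
    ∃ b : ℕ → ContDiffBump (0 : E), (∀ j, (b j).rOut ≤ δ) ∧
      ∀ f : E → ℝ, LocallyIntegrable f μ →
        ∀ᵐ x ∂μ, Tendsto (fun j => mollify μ (b j) f x) atTop (𝓝 (f x)) := by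
  refine ⟨fun j => ⟨δ / (j + 1) / 2, δ / (j + 1), by positivity, half_lt_self (by positivity)⟩,
    fun j => div_le_self hδ.le (by simp), fun f hf => ?_⟩
  refine ContDiffBump.ae_convolution_tendsto_right_of_locallyIntegrable (K := 2) ?_
    (.of_forall fun j => by dsimp only; linarith) hf
  simpa [div_eq_mul_inv] using (tendsto_one_div_add_atTop_nhds_zero_nat (𝕜 := ℝ)).const_mul δ

lemma pairDeviation_le_of_forall_contDiff (hΩ : IsOpen Ω) {S : Set E} (hS : IsCompact S)
    (hSΩ : S ⊆ Ω) {c : NNReal}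
    (hc : ∀ f : E → ℝ, ContDiff ℝ 1 f → pairDeviation μ S f ≤ c * ∫⁻ x in S, ‖fderiv ℝ f x‖ₑ ∂μ)
    (hu : HasWeakFDerivOn μ Ω u g) : pairDeviation μ S u ≤ c * ∫⁻ x in Ω, ‖g x‖ₑ ∂μ := by
  obtain ⟨δ, hδ, hδΩ⟩ := hS.exists_cthickening_subset_open hΩ hSΩ
  obtain ⟨b, hb_le, hb_lim⟩ := exists_contDiffBump_seq_tendsto (μ := μ) hδ
  have hu_loc : LocallyIntegrable (Ω.indicator u) μ :=
    (hu.integrableOn.integrable_indicator hΩ.measurableSet).locallyIntegrable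
  let f (j : ℕ) : E → ℝ := mollify μ (b j) (Ω.indicator u)
  have hf (j : ℕ) : ContDiff ℝ 1 (f j) := contDiff_mollify (b j) hu_loc
  have h_ball (j : ℕ) (x : E) (hx : x ∈ S) : Metric.closedBall x (b j).rOut ⊆ Ω :=
    (Metric.closedBall_subset_closedBall (hb_le j)).trans
      ((Metric.closedBall_subset_cthickening hx δ).trans hδΩ)
  have h_lim : ∀ᵐ x ∂μ, x ∈ S → Tendsto (fun j => f j x) atTop (𝓝 (u x)) := by
    filter_upwards [hb_lim _ hu_loc] with x hx hxS
    rwa [indicator_of_mem (hSΩ hxS)] at hx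
  refine (pairDeviation_le_liminf hS.measurableSet (fun j => (hf j).continuous.measurable)
    h_lim).trans
    (liminf_le_of_frequently_le' (.of_forall fun j => (hc _ (hf j)).trans ?_))
  gcongr c * ?_
  exact setLIntegral_enorm_fderiv_mollify_le (b j) hΩ.measurableSet hu hS.measurableSet (h_ball j)

end WeakDerivatives

section Charts

variable {E : Type*} [NormedAddCommGroup E] [NormedSpace ℝ E] [FiniteDimensional ℝ E]

lemma exists_monotone_compact_convex_iUnion_eq {W : Set E} (hW_open : IsOpen W)
    (hW : Convex ℝ W) (hW_bdd : Bornology.IsBounded W) :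
    ∃ C : ℕ → Set E, Monotone C ∧ (∀ j, IsCompact (C j)) ∧ (∀ j, Convex ℝ (C j)) ∧
      ⋃ j, C j = W := by
  let C (j : ℕ) : Set E := {x | Metric.ball x (1 / (j + 1)) ⊆ W}
  have hC_sub (j : ℕ) : C j ⊆ W := fun x hx => hx (Metric.mem_ball_self (by positivity))
  have hC_closed (j : ℕ) : IsClosed (C j) := by
    refine isClosed_of_closure_subset fun x hx q hq => ?_
    obtain ⟨y, hqy, hy⟩ := mem_closure_iff.1 hx (Metric.ball q (1 / (j + 1))) Metric.isOpen_ball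
      (Metric.mem_ball_comm.1 hq)
    exact hy (Metric.mem_ball_comm.1 hqy)
  have hC_eq (j : ℕ) : C j = ⋂ v ∈ Metric.ball (0 : E) (1 / (j + 1)), (v + ·) ⁻¹' W := by
    ext x
    simp only [C, mem_iInter₂, mem_preimage, mem_ofPred_eq, subset_def, Metric.mem_ball,
      dist_eq_norm, sub_zero]
    exact ⟨fun h v hv => h _ (by simpa using hv), fun h q hq => by simpa using h _ hq⟩
  refine ⟨C, fun i j hij x hx => ?_, fun j => ?_, fun j => ?_, ?_⟩
  · exact (Metric.ball_subset_ball (Nat.one_div_le_one_div hij)).trans hx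
  · exact Metric.isCompact_of_isClosed_isBounded (hC_closed j) (hW_bdd.subset (hC_sub j))
  · rw [hC_eq]
    exact convex_iInter₂ fun v _ => hW.translate_preimage_right v
  · refine (iUnion_subset hC_sub).antisymm fun x hx => ?_
    obtain ⟨r, hr, hball⟩ := Metric.isOpen_iff.1 hW_open x hx
    obtain ⟨j, hj⟩ := exists_nat_one_div_lt hr
    exact mem_iUnion.2 ⟨j, (Metric.ball_subset_ball hj.le).trans hball⟩

variable [MeasurableSpace E] [BorelSpace E] {μ : Measure E} [μ.IsAddHaarMeasure]

lemma pairDeviation_image_le {K : NNReal} {k : E → E} (hk : LipschitzWith K k) (C : Set E)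
    {f : E → ℝ} (hf : Continuous f) :
    pairDeviation μ (k '' C) f ≤
      (K : ℝ≥0∞) ^ Module.finrank ℝ E * ((K : ℝ≥0∞) ^ Module.finrank ℝ E *
        ∫⁻ w in C, ∫⁻ w' in C, ‖f (k w) - f (k w')‖ₑ ∂μ ∂μ) := by
  have hk_meas : Measurable k := hk.continuous.measurable
  have hf_meas : Measurable f := hf.measurable
  have h_meas : Measurable fun x => ∫⁻ y in k '' C, ‖f x - f y‖ₑ ∂μ :=
    Measurable.lintegral_prod_right' (f := fun p : E × E => ‖f p.1 - f p.2‖ₑ) (by fun_prop)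
  rw [pairDeviation_eq_lintegral_lintegral hf_meas.aemeasurable]
  refine (setLIntegral_image_le_of_lipschitzOnWith hk_meas hk.lipschitzOnWith h_meas).trans ?_
  gcongr
  rw [← lintegral_const_mul' _ _ (ENNReal.pow_ne_top ENNReal.coe_ne_top)]
  exact lintegral_mono fun w => setLIntegral_image_le_of_lipschitzOnWith hk_meas
    hk.lipschitzOnWith (by fun_prop)

lemma exists_pairDeviation_image_le_of_contDiff {W : Set E} (hW : Bornology.IsBounded W)
    {h k : E → E} {K K' : NNReal} (hh : LipschitzOnWith K h (k '' W)) (hk : LipschitzWith K' k)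
    (hhk : LeftInvOn h k W) :
    ∃ c : NNReal, ∀ C ⊆ W, Convex ℝ C → MeasurableSet C → ∀ f : E → ℝ, ContDiff ℝ 1 f →
      pairDeviation μ (k '' C) f ≤ c * ∫⁻ x in k '' C, ‖fderiv ℝ f x‖ₑ ∂μ := by
  obtain ⟨D, hD⟩ := Metric.isBounded_iff_nndist.1 hW
  let d := Module.finrank ℝ E
  obtain ⟨m, hm⟩ : ∃ m : NNReal, m = μ W := ⟨_, ENNReal.coe_toNNReal hW.measure_lt_top.ne⟩
  refine ⟨K' ^ d * (K' ^ d * (K' * D * (2 ^ d * m * K ^ d))),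
    fun C hCW hC hC_meas f hf => ?_⟩
  have h_segment (w) (hw : w ∈ C) (w') (hw' : w' ∈ C) : ‖f (k w) - f (k w')‖ₑ ≤ (K' * D : NNReal) *
      ∫⁻ t in Ioc (0 : ℝ) 1, ‖fderiv ℝ f (k (AffineMap.lineMap w w' t))‖ₑ := by
    have h_line : LipschitzWith D (AffineMap.lineMap w w' : ℝ → E) :=
      (lipschitzWith_lineMap w w').weaken (hD (hCW hw) (hCW hw'))
    simpa [enorm_sub_rev] using enorm_sub_le_lintegral_enorm_fderiv hf (hk.comp h_line)
  have h_meas : Measurable fun x => ‖fderiv ℝ f x‖ₑ :=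
    (hf.continuous_fderiv one_ne_zero).enorm.measurable
  calc pairDeviation μ (k '' C) f
      ≤ K' ^ d * (K' ^ d * ∫⁻ w in C, ∫⁻ w' in C, ‖f (k w) - f (k w')‖ₑ ∂μ ∂μ) :=
        pairDeviation_image_le hk C hf.continuous
    _ ≤ K' ^ d * (K' ^ d * ((K' * D : NNReal) *
          (2 ^ d * μ C * ∫⁻ w in C, ‖fderiv ℝ f (k w)‖ₑ ∂μ))) := by
        gcongr
        exact setLIntegral_setLIntegral_le_of_le_lintegral_lineMap hC hC_meas
          (h_meas.comp hk.continuous.measurable) h_segment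
    _ ≤ K' ^ d * (K' ^ d * ((K' * D : NNReal) *
          (2 ^ d * μ W * (K ^ d * ∫⁻ x in k '' C, ‖fderiv ℝ f x‖ₑ ∂μ)))) := by
        gcongr
        exact setLIntegral_comp_le_of_lipschitzOnWith_leftInvOn hk.continuous.measurable
          (hh.mono (image_mono hCW)) (hhk.mono hCW) h_meas
    _ = _ := by
        rw [← hm]
        push_cast
        ring

theorem exists_pairDeviation_image_le {Ω W : Set E} (hΩ : IsOpen Ω) (hW_open : IsOpen W)
    (hW : Convex ℝ W) (hW_bdd : Bornology.IsBounded W) {h k : E → E} {K K' : NNReal}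
    (hh : LipschitzOnWith K h (k '' W)) (hk : LipschitzWith K' k) (hhk : LeftInvOn h k W)
    (hkΩ : MapsTo k W Ω) :
    ∃ c : NNReal, ∀ u g, HasWeakFDerivOn μ Ω u g →
      pairDeviation μ (k '' W) u ≤ c * ∫⁻ x in Ω, ‖g x‖ₑ ∂μ := by
  obtain ⟨c, hc⟩ := exists_pairDeviation_image_le_of_contDiff (μ := μ) hW_bdd hh hk hhk
  obtain ⟨C, hC_mono, hC_compact, hC_convex, rfl⟩ :=
    exists_monotone_compact_convex_iUnion_eq hW_open hW hW_bdd
  refine ⟨c, fun u g hu => ?_⟩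
  have hkC_mono : Monotone fun j => k '' C j := fun i j hij => image_mono (hC_mono hij)
  rw [pairDeviation, image_iUnion, ← iUnion_prod_of_monotone hkC_mono hkC_mono,
    setLIntegral_iUnion_of_directed _ (hkC_mono.set_prod hkC_mono).directed_le]
  refine iSup_le fun j => pairDeviation_le_of_forall_contDiff hΩ
    ((hC_compact j).image hk.continuous) ?_ (fun f hf => ?_) hu
  · exact (hkΩ.mono_left (subset_iUnion C j)).image_subset
  · exact hc _ (subset_iUnion C j) (hC_convex j) (hC_compact j).measurableSet f hf

end Charts

section Poincare

lemma isPreconnected_induction_finset_cover {X ι : Type*} [TopologicalSpace X] {Ω : Set X}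
    (hΩ : IsPreconnected Ω) (hΩ_ne : Ω.Nonempty) {t : Finset ι} {V : ι → Set X}
    (hV : ∀ i ∈ t, IsOpen (V i)) (hΩV : Ω ⊆ ⋃ i ∈ t, V i) {P : Set X → Prop}
    (h_cover : ∀ i ∈ t, P (V i ∩ Ω))
    (h_union : ∀ A B, IsOpen A → IsOpen B → P (A ∩ Ω) → P (B ∩ Ω) → (Ω ∩ (A ∩ B)).Nonempty →
      P ((A ∪ B) ∩ Ω)) : P Ω := by
  classical
  let Q (s : Finset ι) : Prop :=
    s ⊆ t ∧ (Ω ∩ ⋃ i ∈ s, V i).Nonempty ∧ P ((⋃ i ∈ s, V i) ∩ Ω)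
  obtain ⟨s, ⟨hst, hs_ne, hsP⟩, hs_max⟩ : ∃ s, Maximal Q s := by
    obtain ⟨x, hx⟩ := hΩ_ne
    obtain ⟨i, hi, hxi⟩ := mem_iUnion₂.1 (hΩV hx)
    have h_fin : {s | Q s}.Finite := t.powerset.finite_toSet.subset fun s hs =>
      Finset.mem_coe.2 (Finset.mem_powerset.2 hs.1)
    exact h_fin.exists_maximal ⟨{i}, by simpa, by simpa using ⟨x, hx, hxi⟩,
      by simpa using h_cover i hi⟩
  have hs_open : IsOpen (⋃ i ∈ s, V i) := isOpen_biUnion fun i hi => hV i (hst hi)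
  suffices hΩs : Ω ⊆ ⋃ i ∈ s, V i by rwa [inter_eq_self_of_subset_right hΩs] at hsP
  intro x hx
  by_contra hxs
  have h_remaining : (Ω ∩ ⋃ i ∈ t \ s, V i).Nonempty := by
    obtain ⟨i, hi, hxi⟩ := mem_iUnion₂.1 (hΩV hx)
    have his : i ∉ s := fun his => hxs (mem_biUnion his hxi)
    exact ⟨x, hx, mem_biUnion (Finset.mem_sdiff.2 ⟨hi, his⟩) hxi⟩
  have h_split : Ω ⊆ (⋃ i ∈ s, V i) ∪ ⋃ i ∈ t \ s, V i := by
    rwa [← Finset.set_biUnion_union, Finset.union_sdiff_of_subset hst]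
  obtain ⟨y, hyΩ, hys, hyt⟩ := hΩ _ _ hs_open
    (isOpen_biUnion fun i hi => hV i (Finset.sdiff_subset hi)) h_split hs_ne h_remaining
  obtain ⟨j, hj, hyj⟩ := mem_iUnion₂.1 hyt
  obtain ⟨hjt, hjs⟩ := Finset.mem_sdiff.1 hj
  have h_insert : Q (insert j s) := by
    refine ⟨Finset.insert_subset hjt hst,
      ⟨y, hyΩ, mem_biUnion (Finset.mem_insert_self j s) hyj⟩, ?_⟩
    rw [Finset.set_biUnion_insert]
    exact h_union _ _ (hV j hjt) hs_open (h_cover j hjt) hsP ⟨y, hyΩ, hyj, hys⟩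
  exact hjs (hs_max h_insert (Finset.subset_insert j s) (Finset.mem_insert_self j s))

variable {E : Type*} [NormedAddCommGroup E] [NormedSpace ℝ E] [MeasurableSpace E]

/-- The Poincaré inequality on `A` for functions in `W^{1,1}(Ω)`: their `L¹(A)` distance to the
constants is controlled by the `L¹(Ω)` norm of the derivative. -/
def PoincareOn (μ : Measure E) (Ω A : Set E) : Prop :=
  ∃ C : NNReal, ∀ u g, HasWeakFDerivOn μ Ω u g →
    ∃ a : ℝ, ∫⁻ x in A, ‖u x - a‖ₑ ∂μ ≤ C * ∫⁻ x in Ω, ‖g x‖ₑ ∂μ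

namespace PoincareOn

variable {μ : Measure E} {Ω A B : Set E}

lemma of_pairDeviation_le [SFinite μ] (hAΩ : A ⊆ Ω) (hA : μ A ≠ ∞) {c : NNReal}
    (hc : ∀ u g, HasWeakFDerivOn μ Ω u g →
      pairDeviation μ A u ≤ c * ∫⁻ x in Ω, ‖g x‖ₑ ∂μ) : PoincareOn μ Ω A := by
  rcases eq_or_ne (μ A) 0 with hA₀ | hA₀
  · exact ⟨0, fun u g _ => ⟨0, by rw [Measure.restrict_zero_set hA₀]; simp⟩⟩
  refine ⟨(μ A)⁻¹.toNNReal * c, fun u g hu => ?_⟩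
  have hu_meas : AEMeasurable u (μ.restrict A) :=
    (hu.integrableOn.mono_set hAΩ).aestronglyMeasurable.aemeasurable
  have h_meas : AEMeasurable (fun x => ∫⁻ y in A, ‖u y - u x‖ₑ ∂μ) (μ.restrict A) :=
    (hu_meas.comp_snd.sub hu_meas.comp_fst).enorm.lintegral_prod_right'
  obtain ⟨x, -, hx⟩ := exists_le_setLAverage hA₀ hA h_meas
  refine ⟨u x, hx.trans ?_⟩
  rw [setLAverage_eq, ← lintegral_lintegral_swap (hu_meas.comp_fst.sub hu_meas.comp_snd).enorm,
    ← pairDeviation_eq_lintegral_lintegral hu_meas, ENNReal.div_eq_inv_mul, ENNReal.coe_mul,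
    ENNReal.coe_toNNReal (ENNReal.inv_ne_top.2 hA₀), mul_assoc]
  gcongr
  exact hc u g hu

lemma union (hA : PoincareOn μ Ω A) (hB : PoincareOn μ Ω B) (hAΩ : A ⊆ Ω) (hB_top : μ B ≠ ∞)
    (hAB : μ (A ∩ B) ≠ 0) : PoincareOn μ Ω (A ∪ B) := by
  obtain ⟨c, hc⟩ := hA
  obtain ⟨d, hd⟩ := hB
  have hAB_top : μ (A ∩ B) ≠ ∞ := measure_ne_top_of_subset inter_subset_right hB_top
  obtain ⟨m, hm⟩ : ∃ m : NNReal, m = μ B / μ (A ∩ B) :=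
    ⟨_, ENNReal.coe_toNNReal (ENNReal.div_ne_top hB_top hAB)⟩
  refine ⟨(1 + m) * (c + d), fun u g hu => ?_⟩
  obtain ⟨a, ha⟩ := hc u g hu
  obtain ⟨b, hb⟩ := hd u g hu
  have hu_meas : AEMeasurable u (μ.restrict (A ∩ B)) :=
    (hu.integrableOn.mono_set (inter_subset_left.trans hAΩ)).aestronglyMeasurable.aemeasurable
  set P := ∫⁻ x in A, ‖u x - a‖ₑ ∂μ
  set Q := ∫⁻ x in B, ‖u x - b‖ₑ ∂μ
  have h_const : ‖b - a‖ₑ * μ (A ∩ B) ≤ P + Q :=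
    calc ‖b - a‖ₑ * μ (A ∩ B) = ∫⁻ _ in A ∩ B, ‖b - a‖ₑ ∂μ := (setLIntegral_const _ _).symm
      _ ≤ ∫⁻ x in A ∩ B, (‖u x - a‖ₑ + ‖u x - b‖ₑ) ∂μ := lintegral_mono fun x => by
          simpa using enorm_sub_le (a := u x - a) (b := u x - b)
      _ = (∫⁻ x in A ∩ B, ‖u x - a‖ₑ ∂μ) + ∫⁻ x in A ∩ B, ‖u x - b‖ₑ ∂μ :=
          lintegral_add_left' (hu_meas.sub_const a).enorm _
      _ ≤ P + Q := add_le_add (lintegral_mono_set inter_subset_left)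
          (lintegral_mono_set inter_subset_right)
  have h_shift : ∫⁻ x in B, ‖u x - a‖ₑ ∂μ ≤ Q + ‖b - a‖ₑ * μ B :=
    calc ∫⁻ x in B, ‖u x - a‖ₑ ∂μ ≤ ∫⁻ x in B, (‖u x - b‖ₑ + ‖b - a‖ₑ) ∂μ :=
          lintegral_mono fun x => by simpa using enorm_add_le (u x - b) (b - a)
      _ = Q + ‖b - a‖ₑ * μ B := by
          rw [lintegral_add_right _ measurable_const, setLIntegral_const]
  refine ⟨a, ?_⟩
  calc ∫⁻ x in A ∪ B, ‖u x - a‖ₑ ∂μ ≤ P + ∫⁻ x in B, ‖u x - a‖ₑ ∂μ := lintegral_union_le _ _ _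
    _ ≤ P + (Q + ‖b - a‖ₑ * μ (A ∩ B) * m) := by
        rw [hm, mul_assoc, ENNReal.mul_div_cancel hAB hAB_top]
        gcongr
    _ ≤ P + (Q + (P + Q) * m) := by gcongr
    _ = (1 + m) * (P + Q) := by ring
    _ ≤ (1 + m) * (c * (∫⁻ x in Ω, ‖g x‖ₑ ∂μ) + d * ∫⁻ x in Ω, ‖g x‖ₑ ∂μ) := by gcongr
    _ = _ := by
        push_cast
        ring

lemma exists_setLIntegral_enorm_le (h : PoincareOn μ Ω Ω) (hΩ : μ Ω ≠ ∞) :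
    ∃ C : NNReal, ∀ u g, HasWeakFDerivOn μ Ω u g → ∫ x in Ω, u x ∂μ = 0 →
      ∫⁻ x in Ω, ‖u x‖ₑ ∂μ ≤ C * ∫⁻ x in Ω, ‖g x‖ₑ ∂μ := by
  obtain ⟨C, hC⟩ := h
  refine ⟨2 * C, fun u g hu h_mean => ?_⟩
  obtain ⟨a, ha⟩ := hC u g hu
  have h_const : ‖a‖ₑ * μ Ω ≤ ∫⁻ x in Ω, ‖u x - a‖ₑ ∂μ := by
    refine le_trans (le_of_eq ?_) (enorm_integral_le_lintegral_enorm _)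
    rw [integral_sub hu.integrableOn (integrableOn_const hΩ), h_mean, setIntegral_const]
    simp [enorm_mul, measureReal_def, hΩ, mul_comm]
  calc ∫⁻ x in Ω, ‖u x‖ₑ ∂μ ≤ ∫⁻ x in Ω, (‖u x - a‖ₑ + ‖a‖ₑ) ∂μ :=
        lintegral_mono fun x => by simpa using enorm_add_le (u x - a) a
    _ = (∫⁻ x in Ω, ‖u x - a‖ₑ ∂μ) + ‖a‖ₑ * μ Ω := by
        rw [lintegral_add_right _ measurable_const, setLIntegral_const]
    _ ≤ 2 * ∫⁻ x in Ω, ‖u x - a‖ₑ ∂μ := by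
        rw [two_mul]
        gcongr
    _ ≤ 2 * (C * ∫⁻ x in Ω, ‖g x‖ₑ ∂μ) := by gcongr
    _ = _ := by
        push_cast
        ring

lemma exists_integral_norm_le (h : PoincareOn μ Ω Ω) (hΩ : μ Ω ≠ ∞) :
    ∃ C : NNReal, ∀ u g, HasWeakFDerivOn μ Ω u g → ∫ x in Ω, u x ∂μ = 0 →
      ∫ x in Ω, ‖u x‖ ∂μ ≤ C * ∫ x in Ω, ‖g x‖ ∂μ := by
  obtain ⟨C, hC⟩ := h.exists_setLIntegral_enorm_le hΩ
  refine ⟨C, fun u g hu h_mean => ?_⟩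
  rw [integral_norm_eq_lintegral_enorm hu.integrableOn.1,
    integral_norm_eq_lintegral_enorm hu.integrableOn_fderiv.1, ← ENNReal.coe_toReal,
    ← ENNReal.toReal_mul]
  exact ENNReal.toReal_mono (ENNReal.mul_ne_top ENNReal.coe_ne_top hu.integrableOn_fderiv.2.ne)
    (hC u g hu h_mean)

end PoincareOn

end Poincare

section LipschitzDomains

theorem exists_isOpen_poincareOn_inter {E : Type*} [NormedAddCommGroup E]
    [InnerProductSpace ℝ E] [FiniteDimensional ℝ E] [MeasurableSpace E] [BorelSpace E]
    {μ : Measure E} [μ.IsAddHaarMeasure] {Ω U H : Set E} (hΩ : IsOpen Ω) (hH_open : IsOpen H)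
    (hH : Convex ℝ H) {x : E} (hU : IsOpen U) (hxU : x ∈ U) {h k : E → E} {K K' : NNReal}
    (hh : LipschitzOnWith K h U) (hk : LipschitzOnWith K' k (h '' U)) (hkh : LeftInvOn k h U)
    (h_flat : h '' (U ∩ Ω) = h '' U ∩ H) :
    ∃ V, IsOpen V ∧ x ∈ V ∧ PoincareOn μ Ω (V ∩ Ω) := by
  obtain ⟨k', hk', hkk'⟩ := hk.extend_finite_dimension
  have hk'h : LeftInvOn k' h U := fun y hy => by rw [← hkk' (mem_image_of_mem h hy), hkh hy]
  obtain ⟨r, hr, h_ball⟩ := Metric.mem_nhds_iff.1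
    (image_mem_nhds_of_lipschitzOnWith_of_leftInvOn (hU.mem_nhds hxU) hh hk' hk'h)
  let W : Set E := Metric.ball (h x) r ∩ H
  have hW {w : E} (hw : w ∈ W) : ∃ y ∈ U ∩ Ω, h y = w :=
    h_flat.symm.subset ⟨h_ball hw.1, hw.2⟩
  have h_image : k' '' W = U ∩ h ⁻¹' Metric.ball (h x) r ∩ Ω := by
    refine Subset.antisymm ?_ fun y hy => ?_
    · rintro _ ⟨w, hw, rfl⟩
      obtain ⟨y, hy, rfl⟩ := hW hw
      rw [hk'h hy.1]
      exact ⟨⟨hy.1, hw.1⟩, hy.2⟩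
    · have hyH : h y ∈ H := (h_flat.subset (mem_image_of_mem h ⟨hy.1.1, hy.2⟩)).2
      exact ⟨h y, ⟨hy.1.2, hyH⟩, hk'h hy.1.1⟩
  have h_inv : LeftInvOn h k' W := fun w hw => by
    obtain ⟨y, hy, rfl⟩ := hW hw
    rw [hk'h hy.1]
  have hW_bdd : Bornology.IsBounded W := Metric.isBounded_ball.subset inter_subset_left
  have h_image_Ω : k' '' W ⊆ Ω := h_image ▸ inter_subset_right
  refine ⟨U ∩ h ⁻¹' Metric.ball (h x) r,
    hh.continuousOn.isOpen_inter_preimage hU Metric.isOpen_ball,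
    ⟨hxU, Metric.mem_ball_self hr⟩, ?_⟩
  have h_image_U : k' '' W ⊆ U := h_image ▸ inter_subset_left.trans inter_subset_left
  obtain ⟨c, hc⟩ := exists_pairDeviation_image_le (μ := μ) hΩ (Metric.isOpen_ball.inter hH_open)
    ((convex_ball _ _).inter hH) hW_bdd (hh.mono h_image_U) hk' h_inv
    (mapsTo_iff_image_subset.2 h_image_Ω)
  rw [← h_image]
  exact .of_pairDeviation_le h_image_Ω (hk'.isBounded_image hW_bdd).measure_lt_top.ne hc

variable {n : ℕ} {Ω : Set (EVec n)}

lemma exists_isOpen_poincareOn_inter_of_mem_closure (hΩ : IsLipschitzDomain Ω) {x : EVec n}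
    (hx : x ∈ closure Ω) : ∃ V, IsOpen V ∧ x ∈ V ∧ PoincareOn volume Ω (V ∩ Ω) := by
  obtain ⟨hΩ_open, -, -, h_charts⟩ := hΩ
  by_cases hxΩ : x ∈ Ω
  · exact exists_isOpen_poincareOn_inter hΩ_open isOpen_univ convex_univ hΩ_open hxΩ
      LipschitzWith.id.lipschitzOnWith LipschitzWith.id.lipschitzOnWith (fun _ _ => rfl) (by simp)
  · obtain ⟨U, h, k, K, e, -, hU, hxU, hh, hk, hkh, h_flat⟩ :=
      h_charts x ⟨hx, by rwa [hΩ_open.interior_eq]⟩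
    exact exists_isOpen_poincareOn_inter hΩ_open
      (isOpen_lt continuous_const (by fun_prop : Continuous fun y : EVec n => ⟪e, y⟫))
      (convex_halfSpace_gt (innerₛₗ ℝ e).isLinear 0) hU hxU hh hk hkh h_flat

theorem poincareOn_self_of_isLipschitzDomain (hΩ : IsLipschitzDomain Ω)
    (hΩ_bdd : Bornology.IsBounded Ω) : PoincareOn volume Ω Ω := by
  choose! V hV_open hxV hV using fun x (hx : x ∈ closure Ω) =>
    exists_isOpen_poincareOn_inter_of_mem_closure hΩ hx
  obtain ⟨t, ht, h_cover⟩ := hΩ_bdd.isCompact_closure.elim_nhds_subcover V fun x hx =>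
    (hV_open x hx).mem_nhds (hxV x hx)
  refine isPreconnected_induction_finset_cover hΩ.2.2.1.isPreconnected hΩ.2.1
    (fun x hx => hV_open x (ht x hx)) (subset_closure.trans h_cover) (fun x hx => hV x (ht x hx))
    fun A B hA hB hPA hPB h_ne => ?_
  rw [union_inter_distrib_right]
  refine hPA.union hPB inter_subset_right
    (hΩ_bdd.subset inter_subset_right).measure_lt_top.ne ?_
  rw [← inter_inter_distrib_right, inter_comm]
  exact ((hΩ.1.inter (hA.inter hB)).measure_pos volume h_ne).ne'

end LipschitzDomains

section Recession

variable {V : Type*} [NormedAddCommGroup V] [NormedSpace ℝ V] {F G : V → ℝ} {K : NNReal}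

/-- `G` is the recession function `F^∞` of `F`. -/
def IsRecessionFunction (F G : V → ℝ) : Prop :=
  ∀ z, Tendsto (fun t : ℝ => t * F (t⁻¹ • z)) (𝓝[>] 0) (𝓝 (G z))

/- Convexity along `w = (1 - r) • z + r • (z + r⁻¹ • (w - z))` and the growth bound give
`F w ≤ F z + K * ‖w - z‖ + r * (K * (1 + ‖z‖) - F z)`; then `r → 0`. -/
lemma lipschitzWith_of_convexOn_of_le (hF : ConvexOn ℝ univ F)
    (hF_le : ∀ z, F z ≤ K * (1 + ‖z‖)) : LipschitzWith K F := by
  refine .of_le_add_mul K fun w z => ?_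
  have h_segment {r : ℝ} (hr : r ∈ Ioo (0 : ℝ) 1) :
      F w ≤ F z + K * dist w z + r * (K * (1 + ‖z‖) - F z) := by
    have h_comb : (1 - r) • z + r • (z + r⁻¹ • (w - z)) = w := by
      rw [smul_add, smul_inv_smul₀ hr.1.ne']
      module
    have h_norm : r * ‖z + r⁻¹ • (w - z)‖ ≤ r * ‖z‖ + dist w z := by
      calc r * ‖z + r⁻¹ • (w - z)‖ ≤ r * (‖z‖ + r⁻¹ * ‖w - z‖) := by
            gcongr
            · exact hr.1.le
            · exact (norm_add_le _ _).trans_eq (by rw [norm_smul_of_nonneg (inv_nonneg.2 hr.1.le)])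
        _ = r * ‖z‖ + dist w z := by rw [mul_add, mul_inv_cancel_left₀ hr.1.ne', dist_eq_norm]
    have h_convex := hF.2 (mem_univ z) (mem_univ (z + r⁻¹ • (w - z)))
      (sub_nonneg.2 hr.2.le) hr.1.le (sub_add_cancel 1 r)
    rw [h_comb, smul_eq_mul, smul_eq_mul] at h_convex
    nlinarith [mul_le_mul_of_nonneg_left (hF_le (z + r⁻¹ • (w - z))) hr.1.le,
      mul_le_mul_of_nonneg_left h_norm K.coe_nonneg]
  have h_tendsto : Tendsto (fun r : ℝ => F z + K * dist w z + r * (K * (1 + ‖z‖) - F z))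
      (𝓝[>] 0) (𝓝 (F z + K * dist w z)) := by
    refine tendsto_nhdsWithin_of_tendsto_nhds (Continuous.tendsto' (by fun_prop) _ _ (by simp))
  exact ge_of_tendsto h_tendsto (mem_of_superset (Ioo_mem_nhdsGT one_pos) fun r => h_segment)

lemma lipschitzWith_mul_comp_inv_smul (hF : LipschitzWith K F) (t : ℝ) :
    LipschitzWith K fun z => t * F (t⁻¹ • z) := by
  refine .of_dist_le_mul fun z w => ?_
  rcases eq_or_ne t 0 with rfl | ht
  · simpa using by positivity
  calc dist (t * F (t⁻¹ • z)) (t * F (t⁻¹ • w)) = |t| * dist (F (t⁻¹ • z)) (F (t⁻¹ • w)) := by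
        rw [Real.dist_eq, Real.dist_eq, ← mul_sub, abs_mul]
    _ ≤ |t| * (K * (|t⁻¹| * dist z w)) := by
        grw [hF.dist_le_mul, dist_smul₀, Real.norm_eq_abs]
    _ = K * dist z w := by
        rw [abs_inv]
        field_simp

namespace IsRecessionFunction

lemma map_smul (hG : IsRecessionFunction F G) {s : ℝ} (hs : 0 < s) (z : V) :
    G (s • z) = s * G z := by
  have h_scale : Tendsto (fun t : ℝ => t / s) (𝓝[>] 0) (𝓝[>] 0) := by
    refine tendsto_nhdsWithin_iff.2 ⟨tendsto_nhdsWithin_of_tendsto_nhds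
      (Continuous.tendsto' (by fun_prop) _ _ (zero_div s)), ?_⟩
    filter_upwards [self_mem_nhdsWithin] with t ht using div_pos ht hs
  refine tendsto_nhds_unique (hG (s • z)) ((((hG z).comp h_scale).const_mul s).congr fun t => ?_)
  rw [Function.comp_apply, inv_div, ← mul_assoc, mul_div_cancel₀ _ hs.ne', smul_smul,
    inv_mul_eq_div]

lemma abs_le_mul_norm (hG : IsRecessionFunction F G) (hF : LipschitzWith K F) (z : V) :
    |G z| ≤ K * ‖z‖ := by
  have h_bound (t : ℝ) : |t * F (t⁻¹ • z)| ≤ K * ‖z‖ + |t * F 0| := by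
    have := (lipschitzWith_mul_comp_inv_smul hF t).dist_le_mul z 0
    rw [smul_zero, Real.dist_eq, dist_zero_right] at this
    linarith [abs_sub_abs_le_abs_sub (t * F (t⁻¹ • z)) (t * F 0)]
  have h_tendsto : Tendsto (fun t : ℝ => K * ‖z‖ + |t * F 0|) (𝓝[>] 0) (𝓝 (K * ‖z‖)) :=
    tendsto_nhdsWithin_of_tendsto_nhds (Continuous.tendsto' (by fun_prop) _ _ (by simp))
  exact le_of_tendsto_of_tendsto' (hG z).abs h_tendsto h_bound

lemma tendstoUniformlyOn (hG : IsRecessionFunction F G) (hF : LipschitzWith K F) {s : Set V}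
    (hs : IsCompact s) :
    TendstoUniformlyOn (fun (t : ℝ) z => t * F (t⁻¹ • z)) G (𝓝[>] 0) s := by
  have h_equi : Equicontinuous fun (t : ℝ) z => t * F (t⁻¹ • z) :=
    (LipschitzWith.uniformEquicontinuous _ K (lipschitzWith_mul_comp_inv_smul hF)).equicontinuous
  have h_iff := EquicontinuousOn.tendsto_uniformOnFun_iff_pi' (𝔖 := {s}) (by simpa using hs)
    (fun A _ => h_equi.equicontinuousOn A) (𝓝[>] 0) G
  exact UniformOnFun.tendsto_iff_tendstoUniformlyOn.1
    (h_iff.2 (tendsto_pi_nhds.2 fun z => hG z)) s rfl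

variable [FiniteDimensional ℝ V]

lemma exists_forall_sub_le (hG : IsRecessionFunction F G) (hF : LipschitzWith K F) {ε : ℝ}
    (hε : 0 < ε) : ∃ C, ∀ z, G z - ε * ‖z‖ - C ≤ F z := by
  have := FiniteDimensional.proper_real V
  obtain ⟨r, hr, h_near⟩ := (mem_nhdsGT_iff_exists_Ioo_subset (a := (0 : ℝ))).1
    (Metric.tendstoUniformlyOn_iff.1
      (hG.tendstoUniformlyOn hF (isCompact_sphere (0 : V) 1)) ε hε)
  replace hr : 0 < r := hr
  refine ⟨2 * K * r⁻¹ + |F 0|, fun z => ?_⟩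
  rcases le_or_gt ‖z‖ r⁻¹ with hz | hz
  · have hFz := hF.dist_le_mul z 0
    rw [Real.dist_eq, dist_zero_right] at hFz
    have hK : K * ‖z‖ ≤ K * r⁻¹ := by gcongr
    linarith [neg_le_of_abs_le hFz, le_of_abs_le (hG.abs_le_mul_norm hF z), neg_abs_le (F 0),
      mul_nonneg hε.le (norm_nonneg z)]
  · have hz_pos : 0 < ‖z‖ := (inv_pos.2 hr).trans hz
    have h_unit : ‖z‖⁻¹ • z ∈ Metric.sphere (0 : V) 1 := by
      simp [norm_smul, inv_mul_cancel₀ hz_pos.ne']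
    have h_dist := h_near ⟨inv_pos.2 hz_pos, inv_lt_of_inv_lt₀ hr hz⟩ _ h_unit
    rw [inv_inv, smul_inv_smul₀ hz_pos.ne', hG.map_smul (inv_pos.2 hz_pos), Real.dist_eq,
      ← mul_sub, abs_mul, abs_inv, abs_norm, inv_mul_lt_iff₀ hz_pos] at h_dist
    linarith [le_of_abs_le h_dist.le, abs_nonneg (F 0), inv_pos.2 hr,
      mul_nonneg K.coe_nonneg (inv_pos.2 hr).le]

theorem exists_forall_le_sub_apply (hG : IsRecessionFunction F G) (hF : LipschitzWith K F) {δ : ℝ}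
    (hδ : 0 < δ) : ∃ C, ∀ T : V →L[ℝ] ℝ, (∀ ξ, ‖ξ‖ = 1 → δ ≤ G ξ - T ξ) →
      ∀ z, δ / 2 * ‖z‖ - C ≤ F z - T z := by
  obtain ⟨C, hC⟩ := hG.exists_forall_sub_le hF (half_pos hδ)
  refine ⟨C, fun T hT z => ?_⟩
  have h_homogeneous : δ * ‖z‖ ≤ G z - T z := by
    rcases eq_or_ne z 0 with rfl | hz
    · simpa using neg_le_of_abs_le (hG.abs_le_mul_norm hF 0)
    · have hz_pos : 0 < ‖z‖ := norm_pos_iff.2 hz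
      have h_unit := hT (‖z‖⁻¹ • z) (by simp [norm_smul, inv_mul_cancel₀ hz_pos.ne'])
      rwa [hG.map_smul (inv_pos.2 hz_pos), _root_.map_smul, smul_eq_mul, ← mul_sub,
        le_inv_mul_iff₀ hz_pos, mul_comm] at h_unit
  linarith [hC z]

end IsRecessionFunction

end Recession

section Energy

variable {α V : Type*} [MeasurableSpace α] {μ : Measure α} [IsFiniteMeasure μ]
  [NormedAddCommGroup V] {F G : V → ℝ} {K : NNReal}

lemma integrable_comp_of_lipschitzWith (hF : LipschitzWith K F) {D : α → V}
    (hD : Integrable D μ) : Integrable (fun x => F (D x)) μ := by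
  refine ((integrable_const |F 0|).add (hD.norm.const_mul K)).mono'
    (hF.continuous.comp_aestronglyMeasurable hD.1) (ae_of_all _ fun x => ?_)
  have h_dist := hF.dist_le_mul (D x) 0
  rw [Real.dist_eq, dist_zero_right] at h_dist
  rw [Real.norm_eq_abs, Pi.add_apply]
  linarith [abs_sub_abs_le_abs_sub (F (D x)) (F 0)]

theorem exists_forall_le_integral_sub_apply [NormedSpace ℝ V] [FiniteDimensional ℝ V]
    (hG : IsRecessionFunction F G) (hF : LipschitzWith K F) {T : α → V →L[ℝ] ℝ}
    (hT : AEStronglyMeasurable T μ) {M : ℝ} (hTM : ∀ᵐ x ∂μ, ‖T x‖ ≤ M) {δ : ℝ} (hδ : 0 < δ)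
    (hTG : ∀ᵐ x ∂μ, ∀ ξ, ‖ξ‖ = 1 → δ ≤ G ξ - T x ξ) :
    ∃ C, ∀ D, Integrable D μ → δ / 2 * (∫ x, ‖D x‖ ∂μ) - C ≤ ∫ x, (F (D x) - T x (D x)) ∂μ := by
  obtain ⟨C, hC⟩ := hG.exists_forall_le_sub_apply hF hδ
  refine ⟨μ.real univ * C, fun D hD => ?_⟩
  have h_norm : Integrable (fun x => δ / 2 * ‖D x‖) μ := hD.norm.const_mul _
  have hTD : Integrable (fun x => T x (D x)) μ :=
    (ContinuousLinearMap.id ℝ (V →L[ℝ] ℝ)).integrable_of_bilin_of_bdd_left M hT hTM hD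
  calc δ / 2 * (∫ x, ‖D x‖ ∂μ) - μ.real univ * C = ∫ x, (δ / 2 * ‖D x‖ - C) ∂μ := by
        rw [integral_sub h_norm (integrable_const C), integral_const_mul, integral_const,
          smul_eq_mul]
    _ ≤ ∫ x, (F (D x) - T x (D x)) ∂μ :=
        integral_mono_ae (h_norm.sub (integrable_const C))
          ((integrable_comp_of_lipschitzWith hF hD).sub hTD) (hTG.mono fun x hx => hC _ hx _)

end Energy

section Matrices

variable {ι κ : Type*} [Fintype ι] [Fintype κ]

/-- The identification of matrices with vectors of the Euclidean space of their entries, which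
turns `mnorm` and `mdot` into the Euclidean norm and inner product. -/
noncomputable def flatten : (ι → κ → ℝ) ≃L[ℝ] EuclideanSpace ℝ (ι × κ) :=
  ((LinearEquiv.curry ℝ ℝ ι κ).symm.trans (WithLp.linearEquiv 2 ℝ (ι × κ → ℝ)).symm)
    |>.toContinuousLinearEquiv

lemma flatten_apply (A : ι → κ → ℝ) (a : ι) (i : κ) : flatten A (a, i) = A a i := rfl

lemma inner_flatten (A B : ι → κ → ℝ) : ⟪flatten A, flatten B⟫ = mdot A B := by
  simp [mdot, PiLp.inner_apply, Fintype.sum_prod_type, flatten_apply, mul_comm]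

lemma norm_flatten (A : ι → κ → ℝ) : ‖flatten A‖ = mnorm A := by
  rw [norm_eq_sqrt_real_inner, inner_flatten, mnorm]

lemma norm_toLp_row_le_mnorm (A : ι → κ → ℝ) (a : ι) : ‖WithLp.toLp 2 (A a)‖ ≤ mnorm A := by
  rw [EuclideanSpace.norm_eq]
  refine Real.sqrt_le_sqrt ?_
  simpa [mdot, ← sq] using Finset.single_le_sum
    (f := fun b => ∑ i, A b i ^ 2) (fun b _ => Finset.sum_nonneg fun i _ => sq_nonneg _)
    (Finset.mem_univ a)

lemma vnorm_le_sum_norm (v : ι → ℝ) : vnorm v ≤ ∑ a, ‖v a‖ := by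
  refine Real.sqrt_le_iff.2 ⟨by positivity, ?_⟩
  simpa using Finset.sum_sq_le_sq_sum_of_nonneg fun a (_ : a ∈ Finset.univ) => norm_nonneg (v a)

end Matrices

section VectorPoincare

variable {n : ℕ} {ι : Type*} [Fintype ι] {Ω : Set (EVec n)} {u : EVec n → ι → ℝ}
  {Du : EVec n → ι → Fin n → ℝ}

namespace HasWeakDerivOn

lemma integrableOn_mnorm (h : HasWeakDerivOn Ω u Du) : IntegrableOn (fun x => mnorm (Du x)) Ω := by
  simpa only [IntegrableOn, ContinuousLinearEquiv.coe_coe, norm_flatten] using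
    (flatten.toContinuousLinearMap.integrable_comp h.2.1).norm

lemma hasWeakFDerivOn (h : HasWeakDerivOn Ω u Du) (a : ι) :
    HasWeakFDerivOn volume Ω (fun x => u x a)
      (fun x => innerSL ℝ (WithLp.toLp 2 (Du x a))) := by
  obtain ⟨hu, hDu, h_weak⟩ := h
  let rowFunctional : (ι → Fin n → ℝ) →L[ℝ] EVec n →L[ℝ] ℝ :=
    (innerSL ℝ).toContinuousLinearMap ∘L
      (PiLp.continuousLinearEquiv 2 ℝ fun _ : Fin n => ℝ).symm.toContinuousLinearMap ∘L
      ContinuousLinearMap.proj a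
  have hu_a : IntegrableOn (fun x => u x a) Ω := hu.eval a
  have hDu_a : IntegrableOn (fun x => innerSL ℝ (WithLp.toLp 2 (Du x a))) Ω :=
    rowFunctional.integrable_comp hDu
  refine ⟨hu_a, hDu_a, fun φ hφ hφ_supp hφΩ => ?_⟩
  have h_left : IntegrableOn (fun x => u x a • fderiv ℝ φ x) Ω :=
    hu_a.smul_of_top_left <| ((hφ.continuous_fderiv one_ne_zero).memLp_top_of_hasCompactSupport
      (hφ_supp.fderiv ℝ) volume).restrict Ω
  have h_right : IntegrableOn (fun x => φ x • innerSL ℝ (WithLp.toLp 2 (Du x a))) Ω :=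
    hDu_a.smul_of_top_right
      ((hφ.continuous.memLp_top_of_hasCompactSupport hφ_supp volume).restrict Ω)
  refine ContinuousLinearMap.coe_injective
    ((EuclideanSpace.basisFun (Fin n) ℝ).toBasis.ext fun i => ?_)
  calc (∫ x in Ω, u x a • fderiv ℝ φ x) (EuclideanSpace.basisFun (Fin n) ℝ i)
      = ∫ x in Ω, u x a * fderiv ℝ φ x (EuclideanSpace.single i 1) := by
        rw [ContinuousLinearMap.integral_apply h_left,
          EuclideanSpace.basisFun_apply]
        rfl
    _ = -∫ x in Ω, Du x a i * φ x := h_weak φ hφ hφ_supp hφΩ a i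
    _ = -(∫ x in Ω, φ x • innerSL ℝ (WithLp.toLp 2 (Du x a)))
          (EuclideanSpace.basisFun (Fin n) ℝ i) := by
        rw [ContinuousLinearMap.integral_apply h_right]
        simp [EuclideanSpace.inner_single_right, mul_comm]

end HasWeakDerivOn

lemma exists_integral_vnorm_le_of_poincareOn (h : PoincareOn volume Ω Ω) (hΩ : volume Ω ≠ ∞) :
    ∃ C : NNReal, ∀ (u : EVec n → ι → ℝ) Du, HasWeakDerivOn Ω u Du → ZeroMean Ω u →
      ∫ x in Ω, vnorm (u x) ≤ C * ∫ x in Ω, mnorm (Du x) := by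
  obtain ⟨C, hC⟩ := h.exists_integral_norm_le hΩ
  refine ⟨Fintype.card ι * C, fun u Du hu h_mean => ?_⟩
  have hu_a (a : ι) : IntegrableOn (fun x => ‖u x a‖) Ω := (hu.hasWeakFDerivOn a).integrableOn.norm
  have h_row (a : ι) : ∫ x in Ω, ‖u x a‖ ≤ C * ∫ x in Ω, mnorm (Du x) := by
    refine (hC _ _ (hu.hasWeakFDerivOn a) (h_mean a)).trans ?_
    refine mul_le_mul_of_nonneg_left (integral_mono
      (hu.hasWeakFDerivOn a).integrableOn_fderiv.norm hu.integrableOn_mnorm fun x => ?_)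
      C.coe_nonneg
    simpa using norm_toLp_row_le_mnorm (Du x) a
  calc ∫ x in Ω, vnorm (u x) ≤ ∫ x in Ω, ∑ a, ‖u x a‖ :=
        integral_mono_of_nonneg (ae_of_all _ fun x => Real.sqrt_nonneg _)
          (integrable_finsetSum _ fun a _ => hu_a a) (ae_of_all _ fun x => vnorm_le_sum_norm _)
    _ = ∑ a, ∫ x in Ω, ‖u x a‖ := integral_finsetSum _ fun a _ => hu_a a
    _ ≤ ∑ _a : ι, C * ∫ x in Ω, mnorm (Du x) := Finset.sum_le_sum fun a _ => h_row a
    _ = _ := by simp [mul_assoc]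

end VectorPoincare

section Coerciveness

lemma tendsto_atTop_of_le_mul_of_mul_sub_le {α : Type*} {l : Filter α} {a b f : α → ℝ}
    {P δ C : ℝ} (hP : 0 ≤ P) (hδ : 0 < δ) (hab : ∀ k, a k ≤ P * b k)
    (hf : ∀ k, δ * b k - C ≤ f k) (h : Tendsto (fun k => a k + b k) l atTop) :
    Tendsto f l atTop := by
  have h_lower (k : α) : δ / (P + 1) * (a k + b k) - C ≤ f k := by
    calc δ / (P + 1) * (a k + b k) - C ≤ δ / (P + 1) * (P * b k + b k) - C := by
          gcongr
          exact hab k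
      _ = δ * b k - C := by field_simp
      _ ≤ f k := hf k
  exact tendsto_atTop_mono h_lower
    (tendsto_atTop_add_const_right _ _ (h.const_mul_atTop (by positivity)))

lemma exists_lipschitzWith_of_convexOn_of_le_mnorm {ι κ : Type*} [Fintype ι] [Fintype κ]
    {F : (ι → κ → ℝ) → ℝ} (hF : ConvexOn ℝ univ F) {L : ℝ}
    (hF_le : ∀ z, F z ≤ L * (1 + mnorm z)) : ∃ K, LipschitzWith K F := by
  have h_flat : LipschitzWith L.toNNReal (F ∘ flatten.symm) := by
    refine lipschitzWith_of_convexOn_of_le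
      (hF.comp_linearMap flatten.symm.toLinearEquiv.toLinearMap) fun z => ?_
    obtain ⟨A, rfl⟩ := flatten.surjective z
    rw [Function.comp_apply, flatten.symm_apply_apply, norm_flatten]
    refine (hF_le A).trans (mul_le_mul_of_nonneg_right (Real.le_coe_toNNReal L) ?_)
    exact add_nonneg zero_le_one (Real.sqrt_nonneg _)
  exact ⟨_, by simpa [Function.comp_assoc] using h_flat.comp flatten.lipschitz⟩

variable {n N : ℕ} {Ω : Set (EVec n)} {K : NNReal} {F Finf : (Fin N → Fin n → ℝ) → ℝ}
  {T₀ : EVec n → Fin N → Fin n → ℝ}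

lemma exists_forall_le_FFgen (hΩ : volume Ω ≠ ∞) (hF : LipschitzWith K F)
    (hFinf : IsRecessionFunction F Finf)
    (hTmeas : AEStronglyMeasurable T₀ (volume.restrict Ω))
    (hTbdd : ∃ M : ℝ, ∀ᵐ x ∂(volume.restrict Ω), mnorm (T₀ x) ≤ M)
    (hcoerc : ∃ δ₀ : ℝ, 0 < δ₀ ∧ ∀ᵐ x ∂(volume.restrict Ω),
      ∀ ξ : Fin N → Fin n → ℝ, mnorm ξ = 1 → δ₀ ≤ Finf ξ - mdot (T₀ x) ξ) :
    ∃ δ : ℝ, 0 < δ ∧ ∃ C : ℝ, 0 < C ∧ ∀ Dw : EVec n → Fin N → Fin n → ℝ,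
      IntegrableOn Dw Ω → δ * (∫ x in Ω, mnorm (Dw x)) - C ≤ FFgen Ω F T₀ Dw := by
  obtain ⟨M, hM⟩ := hTbdd
  obtain ⟨δ₀, hδ₀, hδ₀_le⟩ := hcoerc
  have : IsFiniteMeasure (volume.restrict Ω) := isFiniteMeasure_restrict.2 hΩ
  have h_recession : IsRecessionFunction (F ∘ flatten.symm) (Finf ∘ flatten.symm) := fun z => by
    simpa using hFinf (flatten.symm z)
  have h_coercive : ∀ᵐ x ∂volume.restrict Ω, ∀ ξ, ‖ξ‖ = 1 →
      δ₀ ≤ (Finf ∘ flatten.symm) ξ - innerSL ℝ (flatten (T₀ x)) ξ := by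
    filter_upwards [hδ₀_le] with x hx ξ hξ
    obtain ⟨A, rfl⟩ := flatten.surjective ξ
    simpa [inner_flatten] using hx A (by rwa [← norm_flatten])
  obtain ⟨C, hC⟩ := exists_forall_le_integral_sub_apply h_recession
    (hF.comp (flatten (ι := Fin N) (κ := Fin n)).symm.lipschitz)
    (((innerSL ℝ).continuous.comp flatten.continuous).comp_aestronglyMeasurable hTmeas)
    (by simpa [norm_flatten] using hM) hδ₀ h_coercive
  refine ⟨δ₀ / 2, half_pos hδ₀, max C 1, lt_max_of_lt_right one_pos, fun Dw hDw => ?_⟩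
  have h_energy := hC _ (flatten.toContinuousLinearMap.integrable_comp hDw)
  simp only [Function.comp_apply, ContinuousLinearEquiv.coe_coe, norm_flatten,
    flatten.symm_apply_apply, innerSL_apply_apply, inner_flatten] at h_energy
  rw [FFgen]
  linarith [le_max_left C 1]

end Coerciveness

theorem general_coerciveness_general {n N : ℕ} {Ω : Set (EVec n)} (hΩ : IsLipschitzDomain Ω)
    (hΩbdd : Bornology.IsBounded Ω) {K : NNReal} {F Finf : (Fin N → Fin n → ℝ) → ℝ}
    (hF : LipschitzWith K F) (hFinf : IsRecessionFunction F Finf)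
    {T₀ : EVec n → Fin N → Fin n → ℝ} (hTmeas : AEStronglyMeasurable T₀ (volume.restrict Ω))
    (hTbdd : ∃ M : ℝ, ∀ᵐ x ∂(volume.restrict Ω), mnorm (T₀ x) ≤ M)
    (hcoerc : ∃ δ₀ : ℝ, 0 < δ₀ ∧ ∀ᵐ x ∂(volume.restrict Ω),
      ∀ ξ : Fin N → Fin n → ℝ, mnorm ξ = 1 → δ₀ ≤ Finf ξ - mdot (T₀ x) ξ) :
    ∃ δ : ℝ, 0 < δ ∧ ∃ C : ℝ, 0 < C ∧
      (∀ Dw : EVec n → Fin N → Fin n → ℝ, IntegrableOn Dw Ω →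
        δ * (∫ x in Ω, mnorm (Dw x)) - C ≤ FFgen Ω F T₀ Dw) ∧
      (∀ (w : ℕ → EVec n → Fin N → ℝ) (Dw : ℕ → EVec n → Fin N → Fin n → ℝ),
        (∀ k, HasWeakDerivOn Ω (w k) (Dw k) ∧ ZeroMean Ω (w k)) →
        Tendsto (fun k => (∫ x in Ω, vnorm (w k x)) + ∫ x in Ω, mnorm (Dw k x)) atTop atTop →
        Tendsto (fun k => FFgen Ω F T₀ (Dw k)) atTop atTop) := by
  have hΩ_top : volume Ω ≠ ∞ := hΩbdd.measure_lt_top.ne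
  obtain ⟨P, hP⟩ := exists_integral_vnorm_le_of_poincareOn (ι := Fin N)
    (poincareOn_self_of_isLipschitzDomain hΩ hΩbdd) hΩ_top
  obtain ⟨δ, hδ, C, hC, h_lower⟩ := exists_forall_le_FFgen hΩ_top hF hFinf hTmeas hTbdd hcoerc
  refine ⟨δ, hδ, C, hC, h_lower, fun w Dw hw h_norm => ?_⟩
  exact tendsto_atTop_of_le_mul_of_mul_sub_le P.coe_nonneg hδ
    (fun k => hP (w k) (Dw k) (hw k).1 (hw k).2) (fun k => h_lower _ (hw k).1.2.1) h_norm

/-- **Lemma 4.1 (coerciveness of `𝓕`).** If `F` is convex of linear growth and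
`T₀ ∈ L^∞(Ω;ℝ^{N×n})` satisfies `ess inf_x min_{|ξ|=1} (F^∞(ξ) − T₀(x)·ξ) > 0`, then
`𝓕[w] ≥ δ∫_Ω|∇w| − C` for all zero-mean `w ∈ W^{1,1}(Ω;ℝ^N)`; in particular `𝓕`
diverges along zero-mean sequences with exploding `W^{1,1}` norm. -/
theorem general_coerciveness
    {n N : ℕ} (Ω : Set (EVec n))
    (hΩ : IsLipschitzDomain Ω) (hΩbdd : Bornology.IsBounded Ω)
    (ν L : ℝ) (hν : 0 < ν) (hνL : ν ≤ L)
    (F : (Fin N → Fin n → ℝ) → ℝ)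
    (hFpos : ∀ z, 0 ≤ F z)
    (hFconv : ConvexOn ℝ Set.univ F)
    (hFgrowth : ∀ z, ν * mnorm z - L ≤ F z ∧ F z ≤ L * (1 + mnorm z))
    (Finf : (Fin N → Fin n → ℝ) → ℝ)
    (hFinf : ∀ z, Filter.Tendsto (fun t : ℝ => t * F (t⁻¹ • z))
      (nhdsWithin 0 (Set.Ioi 0)) (nhds (Finf z)))
    (T₀ : EVec n → Fin N → Fin n → ℝ)
    (hTmeas : AEStronglyMeasurable T₀ (volume.restrict Ω))
    (hTbdd : ∃ M : ℝ, ∀ᵐ x ∂(volume.restrict Ω), mnorm (T₀ x) ≤ M)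
    -- `ess inf_{x∈Ω} min_{|ξ|=1} (F^∞(ξ) − T₀(x)·ξ) > 0`
    (hcoerc : ∃ δ₀ : ℝ, 0 < δ₀ ∧ ∀ᵐ x ∂(volume.restrict Ω),
      ∀ ξ : Fin N → Fin n → ℝ, mnorm ξ = 1 → δ₀ ≤ Finf ξ - mdot (T₀ x) ξ) :
    ∃ δ : ℝ, 0 < δ ∧ ∃ C : ℝ, 0 < C ∧
      (∀ (w : EVec n → Fin N → ℝ) (Dw : EVec n → Fin N → Fin n → ℝ),
        HasWeakDerivOn Ω w Dw → ZeroMean Ω w →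
          δ * (∫ x in Ω, mnorm (Dw x)) - C ≤ FFgen Ω F T₀ Dw) ∧
      (∀ (w : ℕ → EVec n → Fin N → ℝ) (Dw : ℕ → EVec n → Fin N → Fin n → ℝ),
        (∀ k, HasWeakDerivOn Ω (w k) (Dw k) ∧ ZeroMean Ω (w k)) →
        Filter.Tendsto
          (fun k => (∫ x in Ω, vnorm (w k x)) + ∫ x in Ω, mnorm (Dw k x))
          Filter.atTop Filter.atTop →
        Filter.Tendsto (fun k => FFgen Ω F T₀ (Dw k)) Filter.atTop Filter.atTop) := by
  obtain ⟨K, hK⟩ := exists_lipschitzWith_of_convexOn_of_le_mnorm hFconv fun z => (hFgrowth z).2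
  obtain ⟨δ, hδ, C, hC, h_lower, h_tendsto⟩ :=
    general_coerciveness_general hΩ hΩbdd hK hFinf hTmeas hTbdd hcoerc
  exact ⟨δ, hδ, C, hC, fun _ Dw hw _ => h_lower Dw hw.2.1, h_tendsto⟩
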